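/- arXiv:1408.1703 — 3 statements merged into one kernel-verified Lean document; each statement's English description precedes it below -/
import Mathlib

section
/- Every flow-admissible signed eulerian graph with an odd number of negative edges contains two edge-disjoint unbalanced circuits. -/
open Finset

/-- A signed multigraph on vertex type `V` with edge type `E`: each edge `e`
consists of two half-edges indexed by `Bool`; `ends e i` is the end-vertex at
which the half-edge `(e, i)` is attached (loops and multiple edges are
allowed), and `sign e ∈ {1, -1}` is the sign of the edge `e`. -/
structure SignedGraph (V E : Type) where
  ends : E → Bool → V
  sign : E → ℤˣ

namespace SignedGraph

variable {V E : Type} [Fintype V] [Fintype E] [DecidableEq V] [DecidableEq E]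

/-- The valency of `v` in the subgraph spanned by the edge set `S`:
the number of half-edges of edges of `S` attached at `v` (a loop at `v`
contributes `2`). -/
def valencyOn (G : SignedGraph V E) (S : Finset E) (v : V) : ℕ :=
  (univ.filter fun p : E × Bool => p.1 ∈ S ∧ G.ends p.1 p.2 = v).card

/-- The valency of a vertex in `G`. -/
def valency (G : SignedGraph V E) (v : V) : ℕ :=
  G.valencyOn univ v

/-- The set of vertices incident with some edge of `S`. -/
def suppV (G : SignedGraph V E) (S : Finset E) : Finset V :=
  univ.filter fun v => ∃ e ∈ S, ∃ i : Bool, G.ends e i = v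

/-- `u` and `v` are joined by an edge of `S`. -/
def AdjOn (G : SignedGraph V E) (S : Finset E) (u v : V) : Prop :=
  ∃ e ∈ S, ∃ i : Bool, G.ends e i = u ∧ G.ends e (!i) = v

/-- The subgraph spanned by the edge set `S` is connected: any two vertices
incident with edges of `S` are joined by a walk using edges of `S`. -/
def ConnOn (G : SignedGraph V E) (S : Finset E) : Prop :=
  ∀ u ∈ G.suppV S, ∀ v ∈ G.suppV S, Relation.ReflTransGen (G.AdjOn S) u v

/-- `G` is connected (as a graph on the whole vertex set `V`). -/
def Connected (G : SignedGraph V E) : Prop :=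
  Nonempty V ∧ ∀ u v : V, Relation.ReflTransGen (G.AdjOn univ) u v

/-- The edge set `S` spans a circuit: a nonempty connected `2`-regular
subgraph. -/
def IsCircuit (G : SignedGraph V E) (S : Finset E) : Prop :=
  S.Nonempty ∧ G.ConnOn S ∧ ∀ v ∈ G.suppV S, G.valencyOn S v = 2

/-- The sign of a set of edges: the product of the signs of its edges. -/
def signOf (G : SignedGraph V E) (S : Finset E) : ℤˣ :=
  ∏ e ∈ S, G.sign e

/-- The negative edges among `S`. -/
def negEdges (G : SignedGraph V E) (S : Finset E) : Finset E :=
  S.filter fun e => G.sign e = -1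

/-- A balanced circuit: a circuit of sign `+1`. -/
def IsBalancedCircuit (G : SignedGraph V E) (S : Finset E) : Prop :=
  G.IsCircuit S ∧ G.signOf S = 1

/-- An unbalanced circuit: a circuit of sign `-1`. -/
def IsUnbalancedCircuit (G : SignedGraph V E) (S : Finset E) : Prop :=
  G.IsCircuit S ∧ G.signOf S = -1

/-- `G` is balanced: it contains no unbalanced circuit. -/
def Balanced (G : SignedGraph V E) : Prop :=
  ∀ S : Finset E, G.IsCircuit S → G.signOf S = 1

/-- `G` is tightly unbalanced: it is unbalanced, but for some edge `f` the
graph `G - f` is balanced. -/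
def TightlyUnbalanced (G : SignedGraph V E) : Prop :=
  ¬ G.Balanced ∧ ∃ f : E, ∀ S : Finset E, G.IsCircuit S → f ∉ S → G.signOf S = 1

/-- `G` is eulerian: connected with all valencies even. -/
def Eulerian (G : SignedGraph V E) : Prop :=
  G.Connected ∧ ∀ v : V, Even (G.valency v)

/-- The edge set `S` spans an eulerian subgraph of `G`. -/
def EulerianOn (G : SignedGraph V E) (S : Finset E) : Prop :=
  S.Nonempty ∧ G.ConnOn S ∧ ∀ v : V, Even (G.valencyOn S v)

/-- An orientation (bidirection) of `G`: `dir e i = true` means that the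
half-edge `(e, i)` is directed towards its end-vertex, `dir e i = false` that
it is directed away from it.  Compatibility: a positive edge becomes an
ordinary directed edge (one half-edge in, one out) and a negative edge becomes
a broken (extroverted or introverted) edge. -/
structure Orientation (G : SignedGraph V E) where
  dir : E → Bool → Bool
  compat : ∀ e : E, G.sign e = 1 ↔ dir e false ≠ dir e true

/-- `φ` is a flow on `G` with respect to the orientation `O`: at every vertex
`v`, the sum of values on half-edges directed into `v` equals the sum of
values on half-edges directed out of `v` (Kirchhoff's law). -/
def IsFlow {A : Type} [AddCommGroup A] (G : SignedGraph V E)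
    (O : G.Orientation) (φ : E → A) : Prop :=
  ∀ v : V,
    ∑ p ∈ univ.filter (fun p : E × Bool => G.ends p.1 p.2 = v),
      (if O.dir p.1 p.2 then φ p.1 else -φ p.1) = 0

/-- `G` admits a nowhere-zero `A`-flow. -/
def HasNZFlow (G : SignedGraph V E) (A : Type) [AddCommGroup A] : Prop :=
  ∃ (O : G.Orientation) (φ : E → A), G.IsFlow O φ ∧ ∀ e : E, φ e ≠ 0

/-- `G` is flow-admissible: it admits a nowhere-zero integer flow. -/
def FlowAdmissible (G : SignedGraph V E) : Prop :=
  ∃ (O : G.Orientation) (φ : E → ℤ), G.IsFlow O φ ∧ ∀ e : E, φ e ≠ 0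

/-- `G` admits a nowhere-zero `k`-flow: an integer flow with all values in
`{±1, …, ±(k-1)}`. -/
def HasNZkFlow (G : SignedGraph V E) (k : ℕ) : Prop :=
  ∃ (O : G.Orientation) (φ : E → ℤ), G.IsFlow O φ ∧
    ∀ e : E, φ e ≠ 0 ∧ |φ e| < (k : ℤ)

/-- `G` is triply odd: it can be decomposed into three edge-disjoint eulerian
subgraphs, each with an odd number of negative edges, sharing a common
vertex. -/
def TriplyOdd (G : SignedGraph V E) : Prop :=
  ∃ S₁ S₂ S₃ : Finset E,
    Disjoint S₁ S₂ ∧ Disjoint S₁ S₃ ∧ Disjoint S₂ S₃ ∧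
    S₁ ∪ S₂ ∪ S₃ = univ ∧
    G.EulerianOn S₁ ∧ G.EulerianOn S₂ ∧ G.EulerianOn S₃ ∧
    Odd (G.negEdges S₁).card ∧ Odd (G.negEdges S₂).card ∧
    Odd (G.negEdges S₃).card ∧
    ∃ v : V, v ∈ G.suppV S₁ ∧ v ∈ G.suppV S₂ ∧ v ∈ G.suppV S₃

/-- The edge set `P` spans a (nontrivial) path from `u` to `v`: a connected
subgraph in which `u` and `v` have valency `1` and all other vertices have
valency `2`. -/
def IsPathOn (G : SignedGraph V E) (P : Finset E) (u v : V) : Prop :=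
  u ≠ v ∧ G.ConnOn P ∧ u ∈ G.suppV P ∧ v ∈ G.suppV P ∧
  G.valencyOn P u = 1 ∧ G.valencyOn P v = 1 ∧
  ∀ w ∈ G.suppV P, w ≠ u → w ≠ v → G.valencyOn P w = 2

/-- `T` spans a signed circuit of type (2): the union of two unbalanced
circuits meeting at a single vertex. -/
def IsType2 (G : SignedGraph V E) (T : Finset E) : Prop :=
  ∃ (S₁ S₂ : Finset E) (v : V),
    G.IsUnbalancedCircuit S₁ ∧ G.IsUnbalancedCircuit S₂ ∧ Disjoint S₁ S₂ ∧
    G.suppV S₁ ∩ G.suppV S₂ = {v} ∧ S₁ ∪ S₂ = T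

/-- `T` spans a signed circuit of type (3): the union of two vertex-disjoint
unbalanced circuits together with a path meeting the circuits only at its
ends. -/
def IsType3 (G : SignedGraph V E) (T : Finset E) : Prop :=
  ∃ (S₁ S₂ P : Finset E) (u v : V),
    G.IsUnbalancedCircuit S₁ ∧ G.IsUnbalancedCircuit S₂ ∧
    Disjoint (G.suppV S₁) (G.suppV S₂) ∧
    G.IsPathOn P u v ∧ u ∈ G.suppV S₁ ∧ v ∈ G.suppV S₂ ∧
    G.suppV P ∩ G.suppV S₁ = {u} ∧ G.suppV P ∩ G.suppV S₂ = {v} ∧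
    Disjoint P (S₁ ∪ S₂) ∧ S₁ ∪ S₂ ∪ P = T

/-- `T` spans a signed circuit: a balanced circuit, or a signed circuit of
type (2) or (3). -/
def IsSignedCircuit (G : SignedGraph V E) (T : Finset E) : Prop :=
  G.IsBalancedCircuit T ∨ G.IsType2 T ∨ G.IsType3 T

/-- `T` spans a weak unbalanced bicircuit: two edge-disjoint unbalanced
circuits (not necessarily vertex-disjoint) joined by a possibly trivial path
having no edge in the two circuits. -/
def IsWeakBicircuit (G : SignedGraph V E) (T : Finset E) : Prop :=
  ∃ C₁ C₂ : Finset E,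
    G.IsUnbalancedCircuit C₁ ∧ G.IsUnbalancedCircuit C₂ ∧ Disjoint C₁ C₂ ∧
    (((∃ v : V, v ∈ G.suppV C₁ ∧ v ∈ G.suppV C₂) ∧ T = C₁ ∪ C₂) ∨
      ∃ (P : Finset E) (u v : V),
        G.IsPathOn P u v ∧ u ∈ G.suppV C₁ ∧ v ∈ G.suppV C₂ ∧
        Disjoint P (C₁ ∪ C₂) ∧ T = C₁ ∪ C₂ ∪ P)

/-- Every connected component of `G - f` contains an unbalanced circuit,
i.e. `G - f` has no balanced component. -/
def NoBalancedComponentAvoiding (G : SignedGraph V E) (f : E) : Prop :=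
  ∀ u : V, ∃ S : Finset E,
    G.IsCircuit S ∧ G.signOf S = -1 ∧ f ∉ S ∧
    ∀ w ∈ G.suppV S, Relation.ReflTransGen (G.AdjOn (univ.erase f)) w u

/-- `G` is 2-edge-connected: connected, and still connected after removing
any single edge. -/
def TwoEdgeConnected (G : SignedGraph V E) : Prop :=
  G.Connected ∧ ∀ f : E, ∀ u v : V,
    Relation.ReflTransGen (G.AdjOn (univ.erase f)) u v

/-- `G` is antibalanced: replacing its signature `σ` by `-σ` makes it
balanced. -/
def Antibalanced (G : SignedGraph V E) : Prop :=
  ∀ S : Finset E, G.IsCircuit S → (∏ e ∈ S, (-G.sign e)) = 1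

end SignedGraph

/-! ### Abstract combinatorial core -/

theorem core_aux {X : Type} (L : ℕ → X) (neg : X → X) (m : ℕ) (hm : 0 < m)
    (hL : ∀ i, L (i + m) = neg (L i))
    (cover : ∀ i, m ≤ i → ∃ a b, a ≤ i ∧ i < b ∧ b < a + m ∧ L a = L b)  :
    ∃ (k : ℕ) (a b : ℕ → ℕ), 2 ≤ k ∧
      (∀ i ≤ k, a (i+1) ≤ b i ∧ L (a (i+1)) = L (b (i+1))) ∧
      b k = b 0 + m ∧ b (k+1) = b 1 + m ∧ (∀ i < k, b i < a (i+2)) := by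
  classical
  let R : ℕ → ℕ → Prop := fun x y => ∃ a, a ≤ x ∧ a < y ∧ y < a + m ∧ L a = L y
  have Rshift : ∀ x y, R x y → R (x+m) (y+m) := by
    rintro x y ⟨a, h1, h2, h3, h4⟩
    exact ⟨a + m, by omega, by omega, by omega, by rw [hL, hL, h4]⟩
  have ex : ∃ k, ∃ f : ℕ → ℕ, f k = f 0 + m ∧ ∀ i < k, R (f i) (f (i+1)) := by
    obtain ⟨a1, b1, h1, h2, h3, h4⟩ := cover m le_rfl
    have key : ∀ N, ∃ n, ∃ f : ℕ → ℕ, f 0 = b1 ∧ m + N ≤ f n ∧ ∀ i < n, R (f i) (f (i+1)) := by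
      intro N
      induction N with
      | zero => exact ⟨0, fun _ => b1, rfl, by simp; omega, by simp⟩
      | succ N ih =>
        obtain ⟨n, f, hf0, hfn, hR⟩ := ih
        obtain ⟨a, b, g1, g2, g3, g4⟩ := cover (f n) (by omega)
        refine ⟨n+1, fun i => if i ≤ n then f i else b, by simp [hf0], by simp; omega, ?_⟩
        intro i hi
        rcases Nat.lt_or_ge i n with h | h
        · have h' : i + 1 ≤ n := h
          simp only [h.le, h', if_true]
          exact hR i h
        · have : i = n := by omega
          subst this
          simp
          exact ⟨a, g1, by omega, g3, g4⟩
    obtain ⟨n, f, hf0, hfn, hR⟩ := key a1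
    refine ⟨n+1, fun i => if i ≤ n then f i else b1 + m, by simp [hf0], ?_⟩
    intro i hi
    rcases Nat.lt_or_ge i n with h | h
    · have h' : i + 1 ≤ n := h
      simp only [h.le, h', if_true]
      exact hR i h
    · have : i = n := by omega
      subst this
      simp
      exact ⟨a1 + m, by omega, by omega, by omega, by rw [hL, hL, h4]⟩
  obtain ⟨f, hfk, hR⟩ := Nat.find_spec ex
  have hmin := fun j => @Nat.find_min _ _ ex j
  generalize Nat.find ex = k at *
  have hk1 : k ≠ 0 := by rintro rfl; omega
  have hk2 : 2 ≤ k := by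
    by_contra h
    have : k = 1 := by omega
    subst this
    obtain ⟨a, h1, h2, h3, h4⟩ := hR 0 (by omega)
    simp only [Nat.zero_add] at *
    omega
  have hR' : ∀ i, ∃ a, i < k → a ≤ f i ∧ a < f (i+1) ∧ f (i+1) < a + m ∧ L a = L (f (i+1)) := by
    intro i
    by_cases h : i < k
    · obtain ⟨a, ha⟩ := hR i h
      exact ⟨a, fun _ => ha⟩
    · exact ⟨0, fun h' => absurd h' h⟩
  choose g hg using hR'
  refine ⟨k, fun i => if i ≤ k then g (i-1) else g 0 + m, fun i => if i ≤ k then f i else f 1 + m,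
    hk2, ?_, by simp [hfk], by simp; omega, ?_⟩
  · intro i hi
    rcases Nat.lt_or_ge i k with h | h
    · have h' : i + 1 ≤ k := h
      simp only [hi, h', if_true, Nat.add_sub_cancel]
      exact ⟨(hg i h).1, (hg i h).2.2.2⟩
    · have : i = k := by omega
      subst this
      have h0 := hg 0 (by omega)
      simp only [Nat.zero_add] at h0
      simp
      refine ⟨by omega, by rw [hL, hL, h0.2.2.2]⟩
  · intro i hi
    rcases Nat.lt_or_ge (i+1) k with h | h
    · have h' : i + 2 ≤ k := h
      simp only [hi.le, h', if_true]
      have e : i + 2 - 1 = i + 1 := by omega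
      rw [e]
      by_contra hcon
      push Not at hcon
      apply hmin (k-1) (by omega)
      refine ⟨fun j => if j ≤ i then f j else f (j+1), ?_, ?_⟩
      · have h1 : ¬ (k - 1 ≤ i) := by omega
        have h2 : k - 1 + 1 = k := by omega
        simp only [h1, if_false, h2, Nat.zero_le, if_true, hfk]
      · intro j hj
        rcases Nat.lt_trichotomy j i with h1 | h1 | h1
        · have h2 : j + 1 ≤ i := h1
          simp only [h1.le, h2, if_true]
          exact hR j (by omega)
        · subst h1
          simp
          obtain ⟨q1, q2, q3, q4⟩ := hg (j+1) (by omega)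
          exact ⟨g (j+1), hcon, q2, q3, q4⟩
        · have h2 : ¬ (j ≤ i) := by omega
          have h3 : ¬ (j + 1 ≤ i) := by omega
          simp only [h2, h3, if_false]
          exact hR (j+1) (by omega)
    · have e : i + 1 = k := by omega
      have h' : ¬ (i + 2 ≤ k) := by omega
      simp only [hi.le, h', if_true, if_false]
      by_contra hcon
      push Not at hcon
      apply hmin (k-1) (by omega)
      have e2 : k - 1 = i := by omega
      rw [e2]
      refine ⟨fun j => if j < i then f (j+1) else f 1 + m, ?_, ?_⟩
      · have h1 : 0 < i := by omega
        simp [h1]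
      · intro j hj
        rcases Nat.lt_or_ge (j+1) i with h1 | h1
        · simp only [hj, h1, if_true]
          exact hR (j+1) (by omega)
        · have h2 : j + 1 = i := by omega
          have h3 : ¬ (j + 1 < i) := by omega
          simp only [hj, h3, if_true, if_false]
          rw [h2]
          obtain ⟨q1, q2, q3, q4⟩ := hg 0 (by omega)
          simp only [Nat.zero_add] at *
          exact ⟨g 0 + m, hcon, by omega, by omega, by rw [hL, hL, q4]⟩

theorem core_main {X : Type} (L : ℕ → X) (neg : X → X) (m : ℕ) (hm : 0 < m)
    (hL : ∀ i, L (i + m) = neg (L i))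
    (cover : ∀ i, m ≤ i → ∃ a b, a ≤ i ∧ i < b ∧ b < a + m ∧ L a = L b)
    (P : Finset ℕ → X → X → Prop) (P0 : ∀ x, P ∅ x x)
    (Psymm : ∀ U x y, P U x y → P U y x)
    (Punion : ∀ U U' x y z, Disjoint U U' → P U x y → P U' y z → P (U ∪ U') x z)
    (Pseg : ∀ p q, p ≤ q → P (Ico p q) (L p) (L q)) :
    ∃ (c : ℕ) (U Z : Finset ℕ) (x y : X), Disjoint U Z ∧ U ⊆ Ico c (c+m) ∧ Z ⊆ Ico c (c+m) ∧
      P U x (neg x) ∧ P Z y (neg y) := by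
  classical
  obtain ⟨k, a, b, hk2, h1, hbk, hbk1, hlt⟩ := core_aux L neg m hm hL cover
  have hab : ∀ i ≤ k, a (i+1) ≤ b i := fun i hi => (h1 i hi).1
  have hLab : ∀ i ≤ k, L (a (i+1)) = L (b (i+1)) := fun i hi => (h1 i hi).2
  have hmono : ∀ i ≤ k, b 0 ≤ b i := by
    intro i
    induction i with
    | zero => simp
    | succ i ih =>
      intro hi
      have := ih (by omega)
      have := hlt i (by omega)
      have : a (i+2) ≤ b (i+1) := hab (i+1) (by omega)
      omega
  have ext : ∀ (U : Finset ℕ) (x : X) (lo p q : ℕ) (u : ℕ), U ⊆ Ico lo u → u ≤ p → p ≤ q →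
      ∀ y z, P U x y → P (Ico p q) y z → P (U ∪ Ico p q) x z := by
    intro U x lo p q u hU hup hpq y z hxy hyz
    refine Punion _ _ _ _ _ ?_ hxy hyz
    rw [Finset.disjoint_left]
    intro i hi hi'
    have := Finset.mem_Ico.1 (hU hi)
    have := Finset.mem_Ico.1 hi'
    omega
  have state : ∀ j, j < k → ∃ U Z : Finset ℕ, Disjoint U Z ∧
      U ⊆ Ico (b 0) (a (j+1)) ∧ Z ⊆ Ico (b 0) (a (j+1)) ∧
      ((P U (L (b 0)) (L (b j)) ∧ P Z (L (b 1)) (L (b (j+1)))) ∨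
       (P U (L (b 0)) (L (b (j+1))) ∧ P Z (L (b 1)) (L (b j)))) := by
    intro j
    induction j with
    | zero =>
      intro _
      exact ⟨∅, ∅, by simp, by simp, by simp, Or.inl ⟨P0 _, P0 _⟩⟩
    | succ j ih =>
      intro hj
      obtain ⟨U, Z, hd, hU, hZ, hP⟩ := ih (by omega)
      have e1 := hlt j (by omega)
      have e2 := hab j (by omega)
      have e3 := hmono j (by omega)
      have e5 : a (j+1+1) = a (j+2) := rfl
      have hY : P (Ico (b j) (a (j+2))) (L (b j)) (L (b (j+2))) := by
        have := Pseg (b j) (a (j+2)) e1.le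
        rwa [hLab (j+1) (by omega)] at this
      rw [Finset.disjoint_left] at hd
      rcases hP with ⟨hPU, hPZ⟩ | ⟨hPU, hPZ⟩
      · refine ⟨U ∪ Ico (b j) (a (j+2)), Z, ?_, ?_, ?_, Or.inr ⟨?_, hPZ⟩⟩
        · rw [Finset.disjoint_left]
          intro i hi hiZ
          have := Finset.mem_Ico.1 (hZ hiZ)
          rcases Finset.mem_union.1 hi with h | h
          · exact hd h hiZ
          · have := Finset.mem_Ico.1 h
            omega
        · intro i hi
          rw [Finset.mem_Ico]
          rcases Finset.mem_union.1 hi with h | h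
          · have := Finset.mem_Ico.1 (hU h)
            omega
          · have := Finset.mem_Ico.1 h
            omega
        · intro i hi
          have := Finset.mem_Ico.1 (hZ hi)
          rw [Finset.mem_Ico]
          omega
        · exact ext U _ _ _ _ _ hU e2 e1.le _ _ hPU hY
      · refine ⟨U, Z ∪ Ico (b j) (a (j+2)), ?_, ?_, ?_, Or.inl ⟨hPU, ?_⟩⟩
        · rw [Finset.disjoint_left]
          intro i hiU hi
          have := Finset.mem_Ico.1 (hU hiU)
          rcases Finset.mem_union.1 hi with h | h
          · exact hd hiU h
          · have := Finset.mem_Ico.1 h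
            omega
        · intro i hi
          have := Finset.mem_Ico.1 (hU hi)
          rw [Finset.mem_Ico]
          omega
        · intro i hi
          rw [Finset.mem_Ico]
          rcases Finset.mem_union.1 hi with h | h
          · have := Finset.mem_Ico.1 (hZ h)
            omega
          · have := Finset.mem_Ico.1 h
            omega
        · exact ext Z _ _ _ _ _ hZ e2 e1.le _ _ hPZ hY
  obtain ⟨U, Z, hd, hU, hZ, hP⟩ := state (k-1) (by omega)
  have ek : k - 1 + 1 = k := by omega
  rw [ek] at hU hZ hP
  have e1 := hlt (k-1) (by omega)
  have ek2 : k - 1 + 2 = k + 1 := by omega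
  rw [ek2] at e1
  have e2 := hab (k-1) (by omega)
  rw [ek] at e2
  have e3 := hmono (k-1) (by omega)
  have e4 := hab k le_rfl
  have hbk' : L (b k) = neg (L (b 0)) := by rw [hbk, hL]
  have hbk1' : L (b (k+1)) = neg (L (b 1)) := by rw [hbk1, hL]
  rw [Finset.disjoint_left] at hd
  refine ⟨b 0, ?_⟩
  rw [← hbk]
  rcases hP with ⟨hPU, hPZ⟩ | ⟨hPU, hPZ⟩
  · have hX1 : P (Ico (a k) (b (k-1))) (L (b (k-1))) (L (b k)) := by
      apply Psymm
      have := Pseg (a k) (b (k-1)) e2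
      have h := hLab (k-1) (by omega)
      rw [ek] at h
      rwa [h] at this
    have hX2 : P (Ico (a (k+1)) (b k)) (L (b k)) (L (b (k+1))) := by
      apply Psymm
      have := Pseg (a (k+1)) (b k) e4
      rwa [hLab k le_rfl] at this
    refine ⟨U ∪ Ico (a k) (b (k-1)), Z ∪ Ico (a (k+1)) (b k), L (b 0), L (b 1), ?_, ?_, ?_, ?_, ?_⟩
    · rw [Finset.disjoint_left]
      intro i hi hi'
      rcases Finset.mem_union.1 hi with h | h <;> rcases Finset.mem_union.1 hi' with h' | h'
      · exact hd h h'
      · have := Finset.mem_Ico.1 (hU h)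
        have := Finset.mem_Ico.1 h'
        omega
      · have := Finset.mem_Ico.1 (hZ h')
        have := Finset.mem_Ico.1 h
        omega
      · have := Finset.mem_Ico.1 h'
        have := Finset.mem_Ico.1 h
        omega
    · intro i hi
      rw [Finset.mem_Ico]
      rcases Finset.mem_union.1 hi with h | h
      · have := Finset.mem_Ico.1 (hU h)
        omega
      · have := Finset.mem_Ico.1 h
        have : b 0 ≤ a k := by
          have q1 := hlt (k-2) (by omega)
          have q2 := hmono (k-2) (by omega)
          have : k - 2 + 2 = k := by omega
          rw [this] at q1
          omega
        omega
    · intro i hi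
      rw [Finset.mem_Ico]
      rcases Finset.mem_union.1 hi with h | h
      · have := Finset.mem_Ico.1 (hZ h)
        omega
      · have := Finset.mem_Ico.1 h
        omega
    · rw [← hbk']
      exact ext U _ _ _ _ _ hU le_rfl e2 _ _ hPU hX1
    · rw [← hbk1']
      exact ext Z _ _ _ _ _ hZ (by omega) e4 _ _ hPZ hX2
  · have hY : P (Ico (b (k-1)) (a (k+1))) (L (b (k-1))) (L (b (k+1))) := by
      have := Pseg (b (k-1)) (a (k+1)) e1.le
      rwa [hLab k le_rfl] at this
    refine ⟨U, Z ∪ Ico (b (k-1)) (a (k+1)), L (b 0), L (b 1), ?_, ?_, ?_, ?_, ?_⟩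
    · rw [Finset.disjoint_left]
      intro i hi hi'
      rcases Finset.mem_union.1 hi' with h' | h'
      · exact hd hi h'
      · have := Finset.mem_Ico.1 (hU hi)
        have := Finset.mem_Ico.1 h'
        omega
    · intro i hi
      have := Finset.mem_Ico.1 (hU hi)
      rw [Finset.mem_Ico]
      omega
    · intro i hi
      rw [Finset.mem_Ico]
      rcases Finset.mem_union.1 hi with h | h
      · have := Finset.mem_Ico.1 (hZ h)
        omega
      · have := Finset.mem_Ico.1 h
        omega
    · rwa [← hbk']
    · rw [← hbk1']
      exact ext Z _ _ _ _ _ hZ e2 e1.le _ _ hPZ hY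

namespace SignedGraph

section aux

variable {V E : Type} [Fintype V] [Fintype E] [DecidableEq V] [DecidableEq E]

def src (G : SignedGraph V E) (p : E × Bool) : V := G.ends p.1 p.2

def tgt (G : SignedGraph V E) (p : E × Bool) : V := G.ends p.1 (!p.2)

/-- contribution of the edge of a dart to the valency at `v` -/
def dv (G : SignedGraph V E) (p : E × Bool) (v : V) : ℕ :=
  (if G.src p = v then 1 else 0) + (if G.tgt p = v then 1 else 0)

theorem valencyOn_eq (G : SignedGraph V E) (S : Finset E) (v : V) :
    G.valencyOn S v = ∑ e ∈ S, G.dv (e, true) v := by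
  unfold valencyOn
  rw [Finset.card_filter, ← Finset.univ_product_univ, Finset.sum_product]
  rw [← Finset.sum_subset (Finset.subset_univ S)]
  · apply Finset.sum_congr rfl
    intro e he
    rw [Fintype.sum_bool]
    simp only [he, true_and]
    rfl
  · intro e _ he
    simp [he]

theorem dv_eq (G : SignedGraph V E) (p : E × Bool) (v : V) :
    G.dv p v = G.dv (p.1, true) v := by
  obtain ⟨e, i⟩ := p
  cases i
  · exact add_comm _ _
  · rfl

theorem valencyOn_image (G : SignedGraph V E) (U : Finset ℕ) (d : ℕ → E × Bool)
    (hinj : ∀ i ∈ U, ∀ j ∈ U, (d i).1 = (d j).1 → i = j) (v : V) :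
    G.valencyOn (U.image fun i => (d i).1) v = ∑ i ∈ U, G.dv (d i) v := by
  rw [valencyOn_eq, Finset.sum_image (fun i hi j hj h => hinj i hi j hj h)]
  exact Finset.sum_congr rfl fun i _ => (dv_eq G (d i) v).symm

theorem seg_even (G : SignedGraph V E) (d : ℕ → E × Bool) (v : V) (p q : ℕ) (hpq : p ≤ q)
    (h : ∀ i, p ≤ i → i + 1 < q + 1 → G.tgt (d i) = G.src (d (i+1))) :
    Even ((∑ i ∈ Ico p q, G.dv (d i) v) + (if G.src (d p) = v then 1 else 0)
      + (if G.src (d q) = v then 1 else 0)) := by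
  induction q, hpq using Nat.le_induction with
  | base => simp
  | succ q hpq ih =>
    have := ih (fun i h1 h2 => h i h1 (by omega))
    rw [Finset.sum_Ico_succ_top hpq]
    have e := h q hpq (by omega)
    simp only [dv, e] at *
    rw [Nat.even_iff] at *
    omega

def IsTrail (G : SignedGraph V E) (S : Finset E) (n : ℕ) (d : ℕ → E × Bool) : Prop :=
  (∀ i < n, (d i).1 ∈ S) ∧ (∀ i, i + 1 < n → G.tgt (d i) = G.src (d (i+1))) ∧
  (∀ i < n, ∀ j < n, (d i).1 = (d j).1 → i = j)

theorem IsTrail.card_le {G : SignedGraph V E} {S : Finset E} {n : ℕ} {d : ℕ → E × Bool}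
    (h : G.IsTrail S n d) : n ≤ S.card := by
  have h1 : ((range n).image fun i => (d i).1).card = n := by
    rw [Finset.card_image_of_injOn, Finset.card_range]
    intro i hi j hj hij
    exact h.2.2 i (by simpa using hi) j (by simpa using hj) hij
  rw [← h1]
  apply Finset.card_le_card
  intro e he
  obtain ⟨i, hi, rfl⟩ := Finset.mem_image.1 he
  exact h.1 i (by simpa using hi)

/-- extending a trail by a new edge -/
theorem IsTrail.extend {G : SignedGraph V E} {S : Finset E} {n : ℕ} {d : ℕ → E × Bool}
    (h : G.IsTrail S n d) (p : E × Bool) (hp : p.1 ∈ S) (hnew : ∀ i < n, (d i).1 ≠ p.1)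
    (hsrc : ∀ i, i + 1 = n → G.tgt (d i) = G.src p) :
    G.IsTrail S (n+1) (fun i => if i < n then d i else p) := by
  refine ⟨?_, ?_, ?_⟩
  · intro i hi
    by_cases h1 : i < n
    · simpa [h1] using h.1 i h1
    · simpa [h1] using hp
  · intro i hi
    have h1 : i < n := by omega
    by_cases h2 : i + 1 < n
    · simpa [h1, h2] using h.2.1 i h2
    · simpa [h1, h2] using hsrc i (by omega)
  · intro i hi j hj hij
    by_cases h1 : i < n <;> by_cases h2 : j < n
    · simp only [h1, h2, if_true] at hij
      exact h.2.2 i h1 j h2 hij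
    · simp only [h1, h2, if_true, if_false] at hij
      exact absurd hij (hnew i h1)
    · simp only [h1, h2, if_true, if_false] at hij
      exact absurd hij.symm (hnew j h2)
    · omega

/-- a maximal trail in an even edge set is closed -/
theorem IsTrail.closed {G : SignedGraph V E} {S : Finset E} {n : ℕ} {d : ℕ → E × Bool}
    (heven : ∀ v, Even (G.valencyOn S v))
    (h : G.IsTrail S (n+1) d) (hmax : ∀ d', ¬ G.IsTrail S (n+2) d') :
    G.tgt (d n) = G.src (d 0) := by
  by_contra hne
  set v := G.tgt (d n) with hv
  set T := (range (n+1)).image fun i => (d i).1 with hT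
  have hTS : T ⊆ S := by
    intro e he
    obtain ⟨i, hi, rfl⟩ := Finset.mem_image.1 he
    exact h.1 i (by simpa using hi)
  have hval : G.valencyOn T v = ∑ i ∈ range (n+1), G.dv (d i) v :=
    valencyOn_image G _ d (fun i hi j hj => h.2.2 i (by simpa using hi) j (by simpa using hj)) v
  have hs := seg_even G d v 0 n (Nat.zero_le _) (fun i _ hi => h.2.1 i (by omega))
  rw [← Finset.range_eq_Ico] at hs
  rw [Finset.sum_range_succ] at hval
  have hne' : ¬ (G.src (d 0) = v) := fun h => hne h.symm
  have hvv : G.tgt (d n) = v := rfl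
  rw [if_neg hne'] at hs
  have hdn : G.dv (d n) v = (if G.src (d n) = v then 1 else 0) + 1 := by simp [dv, hvv]
  rw [hdn] at hval
  have hodd : ¬ Even (G.valencyOn T v) := by
    rw [Nat.even_iff] at *
    omega
  have hex : ∃ e ∈ S, e ∉ T ∧ G.dv (e, true) v ≠ 0 := by
    by_contra hcon
    push Not at hcon
    apply hodd
    have := heven v
    rw [valencyOn_eq] at *
    rwa [Finset.sum_subset hTS hcon]
  obtain ⟨e, heS, heT, hdv⟩ := hex
  have : ∃ i, G.src (e, i) = v := by
    by_contra hcon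
    push Not at hcon
    apply hdv
    have h1 := hcon true
    have h2 := hcon false
    simp only [src] at h1 h2
    simp [dv, src, tgt, h1, h2]
  obtain ⟨i, hi⟩ := this
  refine hmax _ (h.extend (e, i) heS ?_ ?_)
  · intro j hj hje
    exact heT (Finset.mem_image.2 ⟨j, by simpa using hj, hje⟩)
  · intro j hj
    have : j = n := by omega
    subst this
    rw [hi]

theorem exists_max_trail (G : SignedGraph V E) (S : Finset E) (hS : S.Nonempty) :
    ∃ n d, G.IsTrail S (n+1) d ∧ ∀ d', ¬ G.IsTrail S (n+2) d' := by
  by_contra hcon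
  push Not at hcon
  have : ∀ n, ∃ d, G.IsTrail S (n+1) d := by
    intro n
    induction n with
    | zero =>
      obtain ⟨e, he⟩ := hS
      exact ⟨fun _ => (e, true), fun i _ => he, fun i hi => by omega, fun i hi j hj _ => by omega⟩
    | succ n ih =>
      obtain ⟨d, hd⟩ := ih
      exact hcon n d hd
  obtain ⟨d, hd⟩ := this S.card
  have := hd.card_le
  omega

/-- Euler's theorem -/
theorem euler (G : SignedGraph V E) (hG : G.Eulerian) (hE : Nonempty E) :
    ∃ (m : ℕ) (d : ℕ → E × Bool), 0 < m ∧ (∀ i, G.tgt (d i) = G.src (d (i+1))) ∧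
      (∀ i, d (i + m) = d i) ∧
      (∀ i j, (d i).1 = (d j).1 → i % m = j % m) ∧ ∀ e, ∃ i < m, (d i).1 = e := by
  obtain ⟨n, d, hd, hmax⟩ := exists_max_trail G univ Finset.univ_nonempty
  have hcl := hd.closed hG.2 hmax
  set m := n + 1 with hm
  let d' : ℕ → E × Bool := fun i => d (i % m)
  have hchain : ∀ i, G.tgt (d' i) = G.src (d' (i+1)) := by
    intro i
    have hlt : i % m < m := Nat.mod_lt _ (by omega)
    simp only [d']
    rw [Nat.add_mod]
    rcases Nat.lt_or_ge (i % m + 1) m with h | h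
    · have : (i % m + 1 % m) % m = i % m + 1 := by
        have h1 : 1 % m = 1 := Nat.mod_eq_of_lt (by omega)
        rw [h1, Nat.mod_eq_of_lt h]
      rw [this]
      exact hd.2.1 _ h
    · have h0 : i % m = n := by omega
      have : (i % m + 1 % m) % m = 0 := by
        rw [← Nat.add_mod]
        rw [Nat.add_mod, h0]
        simp [hm]
      rw [this, h0, hcl]
  have hinj : ∀ i j, (d' i).1 = (d' j).1 → i % m = j % m := by
    intro i j h
    exact hd.2.2 _ (Nat.mod_lt _ (by omega)) _ (Nat.mod_lt _ (by omega)) h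
  have hper : ∀ i, d' (i + m) = d' i := by
    intro i
    simp [d']
  refine ⟨m, d', by omega, hchain, hper, hinj, ?_⟩
  -- every edge at a vertex of the trail is used
  have hused : ∀ p : E × Bool, (∃ j, G.src (d' j) = G.src p) → ∃ i < m, (d' i).1 = p.1 := by
    rintro p ⟨j, hj⟩
    by_contra hcon
    push Not at hcon
    have htr : G.IsTrail univ m (fun i => d' (j + i)) := by
      refine ⟨fun i _ => Finset.mem_univ _, fun i _ => hchain _, ?_⟩
      intro a ha b hb hab
      have : j + a ≡ j + b [MOD m] := hinj _ _ hab
      have := Nat.ModEq.add_left_cancel' j this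
      unfold Nat.ModEq at this
      rwa [Nat.mod_eq_of_lt ha, Nat.mod_eq_of_lt hb] at this
    refine hmax _ (htr.extend p (Finset.mem_univ _) ?_ ?_)
    · intro i hi
      have := hcon ((j + i) % m) (Nat.mod_lt _ (by omega))
      simpa [d'] using this
    · intro i hi
      rw [hchain, ← hj, add_assoc, hi, hper]
  have hall : ∀ v, ∃ j, G.src (d' j) = v := by
    intro v
    have := hG.1.2 (G.src (d' 0)) v
    induction this with
    | refl => exact ⟨0, rfl⟩
    | tail _ hadj ih =>
      obtain ⟨j, hj⟩ := ih
      obtain ⟨e, _, i, h1, h2⟩ := hadj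
      obtain ⟨k, _, hk⟩ := hused (e, i) ⟨j, by rw [hj]; exact h1.symm⟩
      by_cases hb : (d' k).2 = i
      · refine ⟨k+1, ?_⟩
        rw [← hchain, ← h2, tgt, hk, hb]
      · refine ⟨k, ?_⟩
        have : (d' k).2 = !i := by
          revert hb
          cases (d' k).2 <;> cases i <;> simp
        rw [← h2, src, hk, this]
  intro e
  obtain ⟨i, hi, hi'⟩ := hused (e, true) (hall _)
  exact ⟨i, hi, hi'⟩

theorem valencyOn_sdiff (G : SignedGraph V E) (S T : Finset E) (h : T ⊆ S) (v : V) :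
    G.valencyOn (S \ T) v + G.valencyOn T v = G.valencyOn S v := by
  simp only [valencyOn_eq]
  exact Finset.sum_sdiff h

theorem reach_aux {α : Type} (r : α → α → Prop) (hr : ∀ x y, r x y → r y x) (g : ℕ → α) (n : ℕ)
    (h : ∀ i < n, r (g i) (g (i+1))) : ∀ i ≤ n, ∀ j ≤ n, Relation.ReflTransGen r (g i) (g j) := by
  have h0 : ∀ i ≤ n, Relation.ReflTransGen r (g 0) (g i) ∧ Relation.ReflTransGen r (g i) (g 0) := by
    intro i
    induction i with
    | zero => exact fun _ => ⟨.refl, .refl⟩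
    | succ i ih =>
      intro hi
      obtain ⟨h1, h2⟩ := ih (by omega)
      exact ⟨h1.tail (h i (by omega)), h2.head (hr _ _ (h i (by omega)))⟩
  intro i hi j hj
  exact (h0 i hi).2.trans (h0 j hj).1

/-- closed trail predicate -/
def IsClosedTrail (G : SignedGraph V E) (S : Finset E) (n : ℕ) (d : ℕ → E × Bool) : Prop :=
  G.IsTrail S (n+1) d ∧ G.tgt (d n) = G.src (d 0)

theorem circuit_of_minimal (G : SignedGraph V E) (S : Finset E) (hS : S.Nonempty)
    (heven : ∀ v, Even (G.valencyOn S v))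
    (hmin : ∀ T ⊆ S, T.Nonempty → (∀ v, Even (G.valencyOn T v)) → T = S) : G.IsCircuit S := by
  classical
  have hex : ∃ n, ∃ d, G.IsClosedTrail S n d := by
    obtain ⟨n, d, hd, hmax⟩ := exists_max_trail G S hS
    exact ⟨n, d, hd, hd.closed heven hmax⟩
  obtain ⟨d, hd, hcl⟩ := Nat.find_spec hex
  have hmn := fun j => @Nat.find_min _ _ hex j
  generalize Nat.find hex = n at *
  have hdist : ∀ i j, i < j → j < n + 1 → G.src (d i) ≠ G.src (d j) := by
    intro i j hij hj he
    apply hmn (j - i - 1) (by omega)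
    refine ⟨fun t => d (i + t), ⟨fun t ht => hd.1 _ (by omega),
      fun t ht => hd.2.1 (i + t) (by omega), ?_⟩, ?_⟩
    · intro t ht u hu htu
      have := hd.2.2 _ (by omega) _ (by omega) htu
      omega
    · have e1 : i + (j - i - 1) + 1 = j := by omega
      have := hd.2.1 (i + (j - i - 1)) (by omega)
      rw [e1] at this
      simp only [Nat.add_zero]
      rw [this, he]
  set T := (range (n+1)).image fun i => (d i).1 with hT
  have hTS : T ⊆ S := by
    intro e he
    obtain ⟨i, hi, rfl⟩ := Finset.mem_image.1 he
    exact hd.1 i (by simpa using hi)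
  have hval : ∀ v, G.valencyOn T v = ∑ i ∈ range (n+1), G.dv (d i) v := fun v =>
    valencyOn_image G _ d (fun i hi j hj => hd.2.2 i (by simpa using hi) j (by simpa using hj)) v
  have hsum : ∀ v, G.valencyOn T v = 2 * ∑ i ∈ range (n+1), (if G.src (d i) = v then 1 else 0) := by
    intro v
    rw [hval v]
    simp only [dv]
    rw [Finset.sum_add_distrib, two_mul]
    congr 1
    rw [Finset.sum_range_succ, Finset.sum_range_succ', hcl]
    congr 1
    apply Finset.sum_congr rfl
    intro i hi
    rw [hd.2.1 i (by simpa using hi)]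
  have hTe : T = S := by
    apply hmin T hTS
    · exact ⟨(d 0).1, Finset.mem_image.2 ⟨0, by simp, rfl⟩⟩
    · intro v
      rw [hsum]
      exact even_two_mul _
  have hadj : ∀ i < n, G.AdjOn S (G.src (d i)) (G.src (d (i+1))) := by
    intro i hi
    refine ⟨(d i).1, hd.1 i (by omega), (d i).2, rfl, ?_⟩
    exact hd.2.1 i (by omega)
  have hsymm : ∀ x y, G.AdjOn S x y → G.AdjOn S y x := by
    rintro x y ⟨e, he, i, h1, h2⟩
    exact ⟨e, he, !i, h2, by simpa using h1⟩
  have hsupp : ∀ v ∈ G.suppV S, ∃ i ≤ n, G.src (d i) = v := by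
    intro v hv
    simp only [suppV, Finset.mem_filter, Finset.mem_univ, true_and] at hv
    obtain ⟨e, he, i, hi⟩ := hv
    rw [← hTe] at he
    obtain ⟨j, hj, hje⟩ := Finset.mem_image.1 he
    have hj' : j < n + 1 := by simpa using hj
    by_cases hb : (d j).2 = i
    · exact ⟨j, by omega, by rw [src, hje, hb, hi]⟩
    · have hb' : (!(d j).2) = i := by
        revert hb
        cases (d j).2 <;> cases i <;> simp
      have ht : G.tgt (d j) = v := by rw [tgt, hje, hb', hi]
      rcases Nat.lt_or_ge j n with h | h
      · exact ⟨j+1, by omega, by rw [← hd.2.1 j (by omega), ht]⟩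
      · have : j = n := by omega
        subst this
        exact ⟨0, by omega, by rw [← hcl, ht]⟩
  refine ⟨hS, ?_, ?_⟩
  · intro u hu v hv
    obtain ⟨i, hi, rfl⟩ := hsupp u hu
    obtain ⟨j, hj, rfl⟩ := hsupp v hv
    exact reach_aux _ hsymm (fun i => G.src (d i)) n hadj i hi j hj
  · intro v hv
    obtain ⟨i, hi, rfl⟩ := hsupp v hv
    rw [← hTe, hsum, Finset.sum_eq_single i]
    · simp
    · intro j hj hji
      have hj' : j < n + 1 := by simpa using hj
      rw [if_neg]
      rcases Nat.lt_or_gt_of_ne hji with h | h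
      · exact hdist j i h (by omega)
      · exact (hdist i j h hj').symm
    · intro h
      exact absurd (Finset.mem_range.2 (by omega)) h

theorem exists_unbalanced (G : SignedGraph V E) : ∀ (c : ℕ) (S : Finset E), S.card = c →
    (∀ v, Even (G.valencyOn S v)) → G.signOf S = -1 →
    ∃ C ⊆ S, G.IsUnbalancedCircuit C := by
  intro c
  induction c using Nat.strong_induction_on with
  | _ c ih =>
    intro S hc heven hs
    have hne : S.Nonempty := by
      rw [Finset.nonempty_iff_ne_empty]
      rintro rfl
      simp [signOf] at hs
    by_cases hmin : ∀ T ⊆ S, T.Nonempty → (∀ v, Even (G.valencyOn T v)) → T = S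
    · exact ⟨S, Finset.Subset.refl _, circuit_of_minimal G S hne heven hmin, hs⟩
    · push Not at hmin
      obtain ⟨T, hTS, hTne, hTe, hTneq⟩ := hmin
      have hss : T ⊂ S := hTS.ssubset_of_ne hTneq
      have hprod : G.signOf (S \ T) * G.signOf T = G.signOf S := Finset.prod_sdiff hTS
      rcases Int.units_eq_one_or (G.signOf T) with h | h
      · rw [h, mul_one, hs] at hprod
        have hlt : (S \ T).card < c := by
          rw [← hc]
          exact Finset.card_lt_card (Finset.sdiff_ssubset hTS hTne)
        obtain ⟨C, hC, hC'⟩ := ih _ hlt (S \ T) rfl (by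
          intro v
          have h1 := valencyOn_sdiff G S T hTS v
          have h2 := heven v
          have h3 := hTe v
          rw [Nat.even_iff] at *
          omega) hprod
        exact ⟨C, hC.trans Finset.sdiff_subset, hC'⟩
      · have hlt : T.card < c := by
          rw [← hc]
          exact Finset.card_lt_card hss
        obtain ⟨C, hC, hC'⟩ := ih _ hlt T rfl hTe h
        exact ⟨C, hC.trans hTS, hC'⟩

/-- a signed graph with exactly one negative edge (up to switching) has no nowhere-zero flow -/
theorem no_flow (G : SignedGraph V E) (g : V → ℤˣ) (f : E)
    (h1 : ∀ e, e ≠ f → G.sign e = g (G.ends e false) * g (G.ends e true))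
    (h2 : G.sign f = -(g (G.ends f false) * g (G.ends f true))) : ¬ G.FlowAdmissible := by
  rintro ⟨O, φ, hφ, hnz⟩
  let t : E → Bool → ℤ := fun e i => (g (G.ends e i) : ℤ) * (if O.dir e i then φ e else -φ e)
  have hsum : ∑ p : E × Bool, t p.1 p.2 = 0 := by
    rw [← Finset.sum_fiberwise (s := univ) (g := fun p : E × Bool => G.ends p.1 p.2)]
    apply Finset.sum_eq_zero
    intro v _
    have := hφ v
    have h3 : ∑ p ∈ univ.filter (fun p : E × Bool => G.ends p.1 p.2 = v), t p.1 p.2 =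
        (g v : ℤ) * ∑ p ∈ univ.filter (fun p : E × Bool => G.ends p.1 p.2 = v),
      (if O.dir p.1 p.2 then φ p.1 else -φ p.1) := by
      rw [Finset.mul_sum]
      apply Finset.sum_congr rfl
      intro p hp
      simp only [t]
      rw [(Finset.mem_filter.1 hp).2]
    rw [h3, this, mul_zero]
  rw [← Finset.univ_product_univ, Finset.sum_product] at hsum
  simp only [Fintype.sum_bool] at hsum
  rw [Finset.sum_eq_single f] at hsum
  · have hc := O.compat f
    have hn := hnz f
    simp only [t] at hsum
    rcases Int.units_eq_one_or (g (G.ends f false)) with ha | ha <;>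
    rcases Int.units_eq_one_or (g (G.ends f true)) with hb | hb <;>
    rw [ha, hb] at hsum h2 <;> rw [h2] at hc <;>
    cases hx : O.dir f false <;> cases hy : O.dir f true <;>
    simp [hx, hy] at hsum hc <;> first | omega | (revert hc; decide)
  · intro e _ he
    have hc := O.compat e
    have h3 := h1 e he
    simp only [t]
    rcases Int.units_eq_one_or (g (G.ends e false)) with ha | ha <;>
    rcases Int.units_eq_one_or (g (G.ends e true)) with hb | hb <;>
    rw [ha, hb] at h3 ⊢ <;> rw [h3] at hc <;>
    cases hx : O.dir e false <;> cases hy : O.dir e true <;>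
    simp [hx, hy] at hc ⊢ <;> (revert hc; decide)
  · simp

theorem signOf_eq_of_odd (G : SignedGraph V E) (hodd : Odd (G.negEdges univ).card) :
    G.signOf univ = -1 := by
  unfold signOf
  rw [← Finset.prod_filter_mul_prod_filter_not univ (fun e => G.sign e = -1)]
  rw [Finset.prod_congr rfl (g := fun _ => (-1 : ℤˣ)) (fun e he => (Finset.mem_filter.1 he).2)]
  rw [Finset.prod_eq_one (s := univ.filter fun e => ¬ G.sign e = -1)]
  · rw [Finset.prod_const, mul_one]
    exact hodd.neg_one_pow
  · intro e he
    have := (Finset.mem_filter.1 he).2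
    rcases Int.units_eq_one_or (G.sign e) with h | h
    · exact h
    · exact absurd h this

end aux

end SignedGraph

open SignedGraph Finset in
/-- Every flow-admissible signed eulerian graph with an odd
number of negative edges contains two edge-disjoint unbalanced circuits. -/
theorem stmt10 {V E : Type} [Fintype V] [Fintype E] [DecidableEq V]
    [DecidableEq E] (G : SignedGraph V E) (hG : G.Eulerian)
    (hadm : G.FlowAdmissible) (hodd : Odd (G.negEdges univ).card) :
    ∃ S₁ S₂ : Finset E,
      G.IsUnbalancedCircuit S₁ ∧ G.IsUnbalancedCircuit S₂ ∧
      Disjoint S₁ S₂ := by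
  have hsign := signOf_eq_of_odd G hodd
  have hE : Nonempty E := by
    obtain ⟨e, _⟩ := Finset.card_pos.1 hodd.pos
    exact ⟨e⟩
  obtain ⟨m, d, hm, hchain, hper, hinj, hsurj⟩ := euler G hG hE
  have hinjW : ∀ c i j, i ∈ Ico c (c+m) → j ∈ Ico c (c+m) → (d i).1 = (d j).1 → i = j := by
    intro c i j hi hj hij
    rw [Finset.mem_Ico] at hi hj
    have h : i ≡ j [MOD m] := hinj i j hij
    have hc : c + (i - c) ≡ c + (j - c) [MOD m] := by
      rwa [Nat.add_sub_cancel' hi.1, Nat.add_sub_cancel' hj.1]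
    have := Nat.ModEq.add_left_cancel' c hc
    unfold Nat.ModEq at this
    rw [Nat.mod_eq_of_lt (by omega), Nat.mod_eq_of_lt (by omega)] at this
    omega
  let s : ℕ → ℤˣ := fun i => ∏ j ∈ range i, G.sign (d j).1
  have hs1 : ∀ i, s (i+1) = s i * G.sign (d i).1 := fun i => Finset.prod_range_succ _ _
  have hsm : s m = -1 := by
    rw [← hsign]
    unfold SignedGraph.signOf
    refine Finset.prod_bij (fun i _ => (d i).1) (fun _ _ => Finset.mem_univ _) ?_ ?_ ?_
    · intro i hi j hj h
      exact hinjW 0 i j (by simpa using hi) (by simpa using hj) h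
    · intro e _
      obtain ⟨i, hi, he⟩ := hsurj e
      exact ⟨i, by simpa using hi, he⟩
    · intro i _
      rfl
  have hsp : ∀ i, s (i+m) = - s i := by
    intro i
    induction i with
    | zero => simp [hsm, s]
    | succ i ih =>
      have e : i + 1 + m = (i + m) + 1 := by omega
      rw [e, hs1, hs1, ih, hper, neg_mul]
  let w : ℕ → V := fun i => G.src (d i)
  have hw1 : ∀ i, G.tgt (d i) = w (i+1) := hchain
  have hwp : ∀ i, w (i+m) = w i := fun i => by simp only [w, hper]
  let L : ℕ → V × ℤˣ := fun i => (w i, s i)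
  let neg : V × ℤˣ → V × ℤˣ := fun x => (x.1, -x.2)
  have hL : ∀ i, L (i+m) = neg (L i) := fun i => by simp only [L, neg, hwp, hsp]
  by_cases cover : ∀ i, m ≤ i → ∃ a b, a ≤ i ∧ i < b ∧ b < a + m ∧ L a = L b
  · let P : Finset ℕ → V × ℤˣ → V × ℤˣ → Prop := fun U x y =>
      (∀ v, Even ((∑ i ∈ U, G.dv (d i) v) + (if x.1 = v then 1 else 0)
        + (if y.1 = v then 1 else 0))) ∧ (∏ i ∈ U, G.sign (d i).1) * x.2 = y.2
    obtain ⟨c, U, Z, x, y, hd, hU, hZ, hPU, hPZ⟩ := core_main L neg m hm hL cover P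
      (by
        intro x
        refine ⟨fun v => ?_, by simp⟩
        simp)
      (by
        rintro U x y ⟨h1, h2⟩
        refine ⟨fun v => ?_, ?_⟩
        · rw [add_right_comm]
          exact h1 v
        · rw [← h2, ← mul_assoc, Int.units_mul_self, one_mul])
      (by
        rintro U U' x y z hd ⟨h1, h2⟩ ⟨h3, h4⟩
        refine ⟨fun v => ?_, ?_⟩
        · have q1 := h1 v
          have q2 := h3 v
          rw [Finset.sum_union hd]
          rw [Nat.even_iff] at *
          omega
        · rw [Finset.prod_union hd, ← h4, ← h2]
          ac_rfl)
      (by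
        intro p q hpq
        refine ⟨fun v => seg_even G d v p q hpq (fun i _ _ => hchain i), ?_⟩
        induction q, hpq using Nat.le_induction with
        | base => simp
        | succ q hpq ih =>
          rw [Finset.prod_Ico_succ_top hpq]
          simp only [L] at ih ⊢
          rw [hs1, ← ih]
          ac_rfl)
    have fin : ∀ (U : Finset ℕ) (x : V × ℤˣ), U ⊆ Ico c (c+m) → P U x (neg x) →
        ∃ C ⊆ U.image (fun i => (d i).1), G.IsUnbalancedCircuit C := by
      intro U x hU hP
      apply exists_unbalanced G _ _ rfl
      · intro v
        rw [valencyOn_image G U d (fun i hi j hj => hinjW c i j (hU hi) (hU hj))]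
        have := hP.1 v
        simp only [neg] at this
        rw [Nat.even_iff] at *
        omega
      · unfold SignedGraph.signOf
        rw [Finset.prod_image (fun i hi j hj => hinjW c i j (hU hi) (hU hj))]
        have := hP.2
        simp only [neg] at this
        rw [neg_eq_neg_one_mul] at this
        exact mul_right_cancel this
    obtain ⟨C₁, hC₁, hu₁⟩ := fin U x hU hPU
    obtain ⟨C₂, hC₂, hu₂⟩ := fin Z y hZ hPZ
    refine ⟨C₁, C₂, hu₁, hu₂, ?_⟩
    rw [Finset.disjoint_left] at hd ⊢
    intro e he1 he2
    obtain ⟨i, hi, hie⟩ := Finset.mem_image.1 (hC₁ he1)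
    obtain ⟨j, hj, hje⟩ := Finset.mem_image.1 (hC₂ he2)
    have : i = j := hinjW c i j (hU hi) (hZ hj) (by rw [hie, hje])
    subst this
    exact hd hi hj
  · exfalso
    push Not at cover
    obtain ⟨i, hmi, hno⟩ := cover
    -- on the window `(i - m, i]` the sign is a function of the vertex
    have hfun : ∀ a b, i < a + m → a ≤ i → i < b + m → b ≤ i → w a = w b → s a = s b := by
      have key : ∀ a b, a < b → i < a + m → b ≤ i → w a = w b → s a = s b := by
        intro a b hab ha hb hwab
        by_contra hne
        have h2 : s b = - s a := by
          rcases Int.units_eq_one_or (s a) with h | h <;>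
          rcases Int.units_eq_one_or (s b) with h' | h' <;> rw [h, h'] at hne <;> simp [h, h'] at hne ⊢
        refine hno b (a+m) hb ha (by omega) ?_
        simp only [L, hwp, hsp, hwab, h2]
      intro a b h1 h2 h3 h4 h5
      rcases Nat.lt_trichotomy a b with h | h | h
      · exact key a b h h1 h4 h5
      · rw [h]
      · exact (key b a h h3 h2 h5.symm).symm
    classical
    let g : V → ℤˣ := fun v => if h : ∃ a, (i < a + m ∧ a ≤ i) ∧ w a = v then s h.choose else 1
    have hg : ∀ a, i < a + m → a ≤ i → g (w a) = s a := by
      intro a h1 h2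
      have h : ∃ a', (i < a' + m ∧ a' ≤ i) ∧ w a' = w a := ⟨a, ⟨h1, h2⟩, rfl⟩
      simp only [g]
      rw [dif_pos h]
      obtain ⟨⟨q1, q2⟩, q3⟩ := h.choose_spec
      exact hfun _ _ q1 q2 h1 h2 q3
    have hends : ∀ p : E × Bool, g (G.ends p.1 false) * g (G.ends p.1 true) =
        g (G.src p) * g (G.tgt p) := by
      rintro ⟨e, b⟩
      cases b
      · rfl
      · simp [src, tgt, mul_comm]
    refine no_flow G g (d i).1 ?_ ?_ hadm
    · intro e he
      obtain ⟨j, hj, rfl⟩ : ∃ j, (i < j + m ∧ j ≤ i) ∧ (d j).1 = e := by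
        obtain ⟨j, hj, hje⟩ := hsurj e
        have hpk : ∀ k, d (j + k * m) = d j := by
          intro k
          induction k with
          | zero => simp
          | succ k ih => rw [Nat.succ_mul, ← add_assoc, hper, ih]
        refine ⟨j + ((i - j) / m) * m, ?_, by rw [hpk, hje]⟩
        have h1 := Nat.div_add_mod (i - j) m
        have h2 := Nat.mod_lt (i - j) hm
        rw [mul_comm] at h1
        omega
      have hji : j ≠ i := by
        rintro rfl
        exact he rfl
      rw [hends, hw1, hg (j+1) (by omega) (by omega), hs1]
      have : G.src (d j) = w j := rfl
      rw [this, hg j hj.1 hj.2, ← mul_assoc, Int.units_mul_self, one_mul]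
    · have h1 : w (i+1) = w (i + 1 - m) := by
        rw [← hwp (i+1-m)]
        congr 1
        omega
      have h2 : s (i+1) = - s (i+1-m) := by
        rw [← hsp (i+1-m)]
        congr 1
        omega
      have h3 : G.src (d i) = w i := rfl
      rw [hends, hw1, h1, hg (i+1-m) (by omega) (by omega), h3, hg i (by omega) le_rfl]
      rw [← mul_neg, ← h2, hs1, ← mul_assoc, Int.units_mul_self, one_mul]
end

section
/- Let G be a signed eulerian graph with an odd number of negative edges. If any two unbalanced circuits of G have an edge in common, then there exists an edge e of G that is contained in every unbalanced circuit of G; in particular, G is tightly unbalanced. -/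
open Finset

namespace Aux14

set_option linter.unusedSectionVars false

variable {V E : Type} [Fintype V] [Fintype E] [DecidableEq V] [DecidableEq E]

/-- boundary mod 2 -/
def bd (ends : E → Bool → V) (S : Finset E) (v : V) : ZMod 2 :=
  ∑ e ∈ S, ((if ends e false = v then 1 else 0) + (if ends e true = v then 1 else 0))

def Adj (ends : E → Bool → V) (S : Finset E) (u v : V) : Prop :=
  ∃ e ∈ S, ∃ i : Bool, ends e i = u ∧ ends e (!i) = v

def cut (ends : E → Bool → V) (S : Finset E) (X : Finset V) : Finset E :=
  S.filter fun e => ¬ (ends e false ∈ X ↔ ends e true ∈ X)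

inductive Tr (ends : E → Bool → V) : V → Finset E → V → Prop
  | nil (x : V) : Tr ends x ∅ x
  | cons (e : E) (i : Bool) (T : Finset E) (y : V) (he : e ∉ T)
      (h : Tr ends (ends e (!i)) T y) : Tr ends (ends e i) (insert e T) y

theorem bd_disj_union (ends : E → Bool → V) {S T : Finset E} (h : Disjoint S T) (v : V) :
    bd ends (S ∪ T) v = bd ends S v + bd ends T v := by
  unfold bd; exact Finset.sum_union h

theorem dot (ends : E → Bool → V) (S : Finset E) (p : V → ZMod 2) :
    ∑ v, p v * bd ends S v = ∑ e ∈ S, (p (ends e false) + p (ends e true)) := by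
  unfold bd
  simp_rw [Finset.mul_sum]
  rw [Finset.sum_comm]
  refine Finset.sum_congr rfl fun e _ => ?_
  simp [mul_add, Finset.sum_add_distrib]

theorem z2 (x : ZMod 2) : x = 0 ∨ x = 1 := by revert x; decide

theorem z2_add_self (x : ZMod 2) : x + x = 0 := by revert x; decide

theorem bd_single (ends : E → Bool → V) (e : E) (i : Bool) (z : V) :
    bd ends {e} z = (if ends e i = z then 1 else 0) + (if ends e (!i) = z then 1 else 0) := by
  cases i <;> simp [bd, add_comm]

theorem reach_symm (ends : E → Bool → V) (S : Finset E) {x y : V}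
    (h : Relation.ReflTransGen (Adj ends S) x y) : Relation.ReflTransGen (Adj ends S) y x := by
  induction h with
  | refl => exact .refl
  | tail _ h ih =>
    obtain ⟨e, he, i, h1, h2⟩ := h
    exact ih.head ⟨e, he, !i, h2, by simpa using h1⟩

theorem adj_mono (ends : E → Bool → V) {S T : Finset E} (h : S ⊆ T) {x y : V}
    (hx : Relation.ReflTransGen (Adj ends S) x y) : Relation.ReflTransGen (Adj ends T) x y :=
  Relation.ReflTransGen.mono (r := Adj ends S) (p := Adj ends T)
    (fun _ _ ⟨e, he, i, hi⟩ => ⟨e, h he, i, hi⟩) x y hx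

theorem Tr.single (ends : E → Bool → V) (e : E) (i : Bool) :
    Tr ends (ends e i) {e} (ends e (!i)) := by
  have := Tr.cons (ends := ends) e i ∅ _ (by simp) (Tr.nil _)
  simpa using this

theorem Tr.append {ends : E → Bool → V} {x y z : V} {S T : Finset E} (h1 : Tr ends x S y)
    (h2 : Tr ends y T z) (hd : Disjoint S T) : Tr ends x (S ∪ T) z := by
  induction h1 with
  | nil x => simpa using h2
  | cons e i S' y he h ih =>
    rw [Finset.disjoint_insert_left] at hd
    rw [Finset.insert_union]
    exact Tr.cons _ _ _ _ (by simp [he, hd.1]) (ih h2 hd.2)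

theorem Tr.symm {ends : E → Bool → V} {x y : V} {S : Finset E} (h1 : Tr ends x S y) :
    Tr ends y S x := by
  induction h1 with
  | nil x => exact Tr.nil x
  | cons e i S' y he h ih =>
    have h2 := Tr.single ends e (!i)
    rw [Bool.not_not] at h2
    have := ih.append h2 (by simpa using he)
    rwa [Finset.union_comm, ← Finset.insert_eq] at this

theorem Tr.on {ends : E → Bool → V} {x y : V} {S : Finset E} (h1 : Tr ends x S y)
    (e : E) (he : e ∈ S) (k : Bool) : ∃ T1 T2, Disjoint T1 T2 ∧ T1 ∪ T2 = S ∧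
      Tr ends x T1 (ends e k) ∧ Tr ends (ends e k) T2 y := by
  induction h1 with
  | nil x => simp at he
  | cons f i S' y hf h ih =>
    by_cases hef : e = f
    · subst hef
      by_cases hk : k = i
      · subst hk
        exact ⟨∅, insert e S', by simp, by simp, Tr.nil _, Tr.cons _ _ _ _ hf h⟩
      · have : k = !i := by cases k <;> cases i <;> simp_all
        subst this
        exact ⟨{e}, S', by simpa using hf, by rw [Finset.insert_eq], Tr.single _ _ _, h⟩
    · obtain ⟨T1, T2, hd, hu, t1, t2⟩ := ih (by simpa [hef] using he)
      have hf1 : f ∉ T1 := fun h => hf (hu ▸ Finset.mem_union_left _ h)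
      have hf2 : f ∉ T2 := fun h => hf (hu ▸ Finset.mem_union_right _ h)
      refine ⟨insert f T1, T2, ?_, ?_, Tr.cons _ _ _ _ hf1 t1, t2⟩
      · rw [Finset.disjoint_insert_left]; exact ⟨hf2, hd⟩
      · rw [Finset.insert_union, hu]

theorem Tr.of_reach {ends : E → Bool → V} {H : Finset E} {x y : V}
    (h : Relation.ReflTransGen (Adj ends H) x y) : ∃ T ⊆ H, Tr ends x T y := by
  induction h using Relation.ReflTransGen.head_induction_on with
  | refl => exact ⟨∅, by simp, Tr.nil _⟩
  | head h' _ ih =>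
    obtain ⟨e, he, i, rfl, rfl⟩ := h'
    obtain ⟨T, hT, t⟩ := ih
    by_cases heT : e ∈ T
    · obtain ⟨T1, T2, hd, hu, t1, t2⟩ := t.on e heT i
      exact ⟨T2, (hu ▸ Finset.subset_union_right : T2 ⊆ T).trans hT, t2⟩
    · exact ⟨insert e T, Finset.insert_subset he hT, Tr.cons _ _ _ _ heT t⟩

theorem Tr.reach {ends : E → Bool → V} {H : Finset E} {x y : V}
    (h : Tr ends x H y) : Relation.ReflTransGen (Adj ends H) x y := by
  induction h with
  | nil x => exact Relation.ReflTransGen.refl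
  | cons e i T y he h ih =>
    exact Relation.ReflTransGen.head ⟨e, by simp, i, rfl, rfl⟩
      (adj_mono ends (Finset.subset_insert _ _) ih)

theorem Tr.bd {ends : E → Bool → V} {H : Finset E} {x y : V}
    (h : Tr ends x H y) (z : V) :
    bd ends H z = (if x = z then 1 else 0) + (if y = z then 1 else 0) := by
  induction h with
  | nil x => rw [z2_add_self]; simp [Aux14.bd]
  | cons e i T y he h ih =>
    rw [Finset.insert_eq, bd_disj_union _ (by simpa using he), ih, bd_single ends e i]
    generalize (if ends e i = z then (1 : ZMod 2) else 0) = a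
    generalize (if ends e (!i) = z then (1 : ZMod 2) else 0) = b
    generalize (if y = z then (1 : ZMod 2) else 0) = c
    revert a b c; decide

/-- `z` lies on a trail of `H` from `u` to `w`. -/
def Good (ends : E → Bool → V) (H : Finset E) (u w z : V) : Prop :=
  ∃ D1 D2, D1 ⊆ H ∧ D2 ⊆ H ∧ Disjoint D1 D2 ∧ Tr ends u D1 z ∧ Tr ends z D2 w

theorem good_of_trail {ends : E → Bool → V} {H R : Finset E} {u w : V} (hR : R ⊆ H)
    (t : Tr ends u R w) (e : E) (he : e ∈ R) (k : Bool) : Good ends H u w (ends e k) := by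
  obtain ⟨T1, T2, hd, hu, t1, t2⟩ := t.on e he k
  subst hu
  exact ⟨T1, T2, Finset.union_subset_left hR, Finset.union_subset_right hR, hd, t1, t2⟩

theorem ear {ends : E → Bool → V} {H : Finset E} {u w : V} (f : E) (i : Bool)
    (hf : f ∈ H) (hx : ¬ Good ends H u w (ends f i)) (hz : Good ends H u w (ends f (!i)))
    (hr : Relation.ReflTransGen (Adj ends (H.erase f)) (ends f i) u) : False := by
  obtain ⟨D1, D2, hD1, hD2, hd, t1, t2⟩ := hz
  have hR : Tr ends u (D1 ∪ D2) w := t1.append t2 hd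
  have hRH : D1 ∪ D2 ⊆ H := Finset.union_subset hD1 hD2
  have hfR : f ∉ D1 ∪ D2 := fun h => hx (good_of_trail hRH hR f h i)
  have key : ∀ x, Relation.ReflTransGen (Adj ends (H.erase f)) x u →
      ∃ h, ((∃ A B, Disjoint A B ∧ A ∪ B = D1 ∧ Tr ends u A h ∧ Tr ends h B (ends f (!i))) ∨
        (∃ A B, Disjoint A B ∧ A ∪ B = D2 ∧ Tr ends (ends f (!i)) A h ∧ Tr ends h B w)) ∧
        Relation.ReflTransGen (Adj ends (H.erase f \ (D1 ∪ D2))) x h := by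
    intro x hx
    induction hx using Relation.ReflTransGen.head_induction_on with
    | refl => exact ⟨u, Or.inl ⟨∅, D1, by simp, by simp, Tr.nil _, t1⟩, .refl⟩
    | head h' _ ih =>
      obtain ⟨e, he, k, rfl, rfl⟩ := h'
      by_cases heR : e ∈ D1 ∪ D2
      · refine ⟨ends e k, ?_, .refl⟩
        rcases Finset.mem_union.1 heR with h | h
        · exact Or.inl (t1.on e h k)
        · exact Or.inr (t2.on e h k)
      · obtain ⟨h, hh, hr⟩ := ih
        exact ⟨h, hh, .head ⟨e, Finset.mem_sdiff.2 ⟨he, heR⟩, k, rfl, rfl⟩ hr⟩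
  obtain ⟨h, hh, hr'⟩ := key _ hr
  obtain ⟨P, hP, tP⟩ := Tr.of_reach hr'
  have hPf : f ∉ P := fun h => by simpa using hP h
  have hPH : P ⊆ H := fun e he => Finset.mem_of_mem_erase (Finset.mem_sdiff.1 (hP he)).1
  have hPR : Disjoint P (D1 ∪ D2) := by
    rw [Finset.disjoint_left]; intro e he; exact (Finset.mem_sdiff.1 (hP he)).2
  have tf := Tr.single ends f i
  apply hx
  rw [Finset.mem_union, not_or] at hfR
  rcases hh with ⟨A, B, hAB, rfl, tA, tB⟩ | ⟨A, B, hAB, rfl, tA, tB⟩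
  · simp only [Finset.disjoint_union_right] at hPR
    rw [Finset.disjoint_union_left] at hd
    rw [Finset.mem_union, not_or] at hfR
    refine ⟨A ∪ P, {f} ∪ D2, ?_, ?_, ?_, tA.append tP.symm hPR.1.1.symm, tf.append t2 ?_⟩
    · exact Finset.union_subset (Finset.union_subset_left hD1) hPH
    · exact Finset.union_subset (by simpa using hf) hD2
    · simp only [Finset.disjoint_union_left, Finset.disjoint_union_right,
        Finset.disjoint_singleton_right, Finset.mem_union, not_or]
      exact ⟨⟨hfR.1.1, hPf⟩, hd.1, hPR.2⟩
    · simpa using hfR.2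
  · simp only [Finset.disjoint_union_right] at hPR
    rw [Finset.disjoint_union_right] at hd
    rw [Finset.mem_union, not_or] at hfR
    refine ⟨D1 ∪ {f}, P ∪ B, ?_, ?_, ?_, t1.append tf.symm (by simpa using hfR.1),
      tP.append tB hPR.2.2⟩
    · exact Finset.union_subset hD1 (by simpa using hf)
    · exact Finset.union_subset hPH (Finset.union_subset_right hD2)
    · simp only [Finset.disjoint_union_left, Finset.disjoint_union_right,
        Finset.disjoint_singleton_left]
      exact ⟨⟨hPR.1.symm, hPf⟩, hd.2, hfR.2.2⟩

theorem menger {ends : E → Bool → V} {H : Finset E} {u v w : V}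
    (h1 : ∀ X : Finset V, cut ends H X = ∅ → u ∈ X → w ∈ X)
    (h2 : ∀ X : Finset V, v ∈ X → u ∉ X → w ∉ X → 1 < (cut ends H X).card) :
    Good ends H u w v := by
  classical
  have huw : ∃ R ⊆ H, Tr ends u R w := by
    apply Tr.of_reach
    have := h1 (Finset.univ.filter fun x => Relation.ReflTransGen (Adj ends H) u x) ?_ ?_
    · simpa using this
    · rw [cut, Finset.filter_eq_empty_iff]
      intro e he
      simp only [Finset.mem_filter, Finset.mem_univ, true_and, not_not]
      exact ⟨fun h => h.tail ⟨e, he, false, rfl, rfl⟩, fun h => h.tail ⟨e, he, true, rfl, rfl⟩⟩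
    · simp [Relation.ReflTransGen.refl]
  obtain ⟨R, hR, tR⟩ := huw
  have gu : Good ends H u w u := ⟨∅, R, by simp, hR, by simp, Tr.nil _, tR⟩
  have gw : Good ends H u w w := ⟨R, ∅, hR, by simp, by simp, tR, Tr.nil _⟩
  by_contra hv
  let r : V → V → Prop := fun p q => Adj ends H p q ∧ ¬ Good ends H u w q
  let X : Finset V := Finset.univ.filter fun x => Relation.ReflTransGen r v x
  have hXdef : ∀ x, x ∈ X ↔ Relation.ReflTransGen r v x := fun x => by simp [X]
  have hXg : ∀ x ∈ X, ¬ Good ends H u w x := by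
    intro x hx
    rw [hXdef] at hx
    induction hx with
    | refl => exact hv
    | tail _ h _ => exact h.2
  have hvX : v ∈ X := (hXdef v).2 .refl
  have hc := h2 X hvX (fun h => hXg _ h gu) (fun h => hXg _ h gw)
  obtain ⟨f1, hf1, f2, hf2, hne⟩ := Finset.one_lt_card.1 hc
  have hor : ∀ f ∈ cut ends H X, f ∈ H ∧ ∃ i, ends f i ∈ X ∧ ends f (!i) ∉ X := by
    intro f hf
    rw [cut, Finset.mem_filter] at hf
    refine ⟨hf.1, ?_⟩
    by_cases h : ends f false ∈ X
    · exact ⟨false, h, fun h' => hf.2 (by simp_all)⟩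
    · exact ⟨true, by by_contra h'; exact hf.2 (by simp_all), h⟩
  have hgood : ∀ f ∈ H, ∀ i, ends f i ∈ X → ends f (!i) ∉ X → Good ends H u w (ends f (!i)) := by
    intro f hf i hi hi'
    by_contra hg
    apply hi'
    rw [hXdef] at hi ⊢
    exact hi.tail ⟨⟨f, hf, i, rfl, rfl⟩, hg⟩
  obtain ⟨hf1H, i1, hx1, hy1⟩ := hor f1 hf1
  obtain ⟨hf2H, i2, hx2, hy2⟩ := hor f2 hf2
  have g1 := hgood f1 hf1H i1 hx1 hy1
  have g2 := hgood f2 hf2H i2 hx2 hy2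
  have hreach : ∀ x ∈ X, Relation.ReflTransGen (Adj ends (H.erase f1)) v x := by
    intro x hx
    rw [hXdef] at hx
    induction hx with
    | refl => exact .refl
    | @tail b c hb h ih =>
      obtain ⟨⟨e, he, k, h3, h4⟩, hg⟩ := h
      refine ih.tail ⟨e, Finset.mem_erase.2 ⟨?_, he⟩, k, h3, h4⟩
      rintro rfl
      have hbX := (hXdef b).2 hb
      have hcX := (hXdef c).2 (hb.tail ⟨⟨e, he, k, h3, h4⟩, hg⟩)
      rw [← h3] at hbX
      rw [← h4] at hcX
      by_cases hk : k = i1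
      · subst hk; exact hy1 hcX
      · have : k = !i1 := by cases k <;> cases i1 <;> simp_all
        subst this; exact hy1 hbX
  refine ear f1 i1 hf1H (hXg _ hx1) g1 ?_
  have s1 : Relation.ReflTransGen (Adj ends (H.erase f1)) (ends f1 i1) v :=
    reach_symm ends _ (hreach _ hx1)
  have s2 : Adj ends (H.erase f1) (ends f2 i2) (ends f2 (!i2)) :=
    ⟨f2, Finset.mem_erase.2 ⟨hne.symm, hf2H⟩, i2, rfl, rfl⟩
  refine ((s1.trans (hreach _ hx2)).tail s2).trans ?_
  obtain ⟨D1, D2, hD1, hD2, hd, t1, t2⟩ := g2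
  refine adj_mono ends ?_ t1.symm.reach
  intro e he
  refine Finset.mem_erase.2 ⟨?_, hD1 he⟩
  rintro rfl
  exact hXg _ hx1 (good_of_trail (Finset.union_subset hD1 hD2) (t1.append t2 hd) e
    (Finset.mem_union_left _ he) i1)

def Conc (ends : E → Bool → V) (A : Finset E) (τ : E → ZMod 2) : Prop :=
  ∃ p : V → ZMod 2, ∃ e ∈ A, ∀ f ∈ A,
    τ f + (p (ends f false) + p (ends f true)) = if f = e then 1 else 0

def NoDisj (ends : E → Bool → V) (A : Finset E) (τ : E → ZMod 2) : Prop :=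
  ∀ S1 S2 : Finset E, S1 ⊆ A → S2 ⊆ A → Disjoint S1 S2 → (∀ v, bd ends S1 v = 0) →
    (∀ v, bd ends S2 v = 0) → ∑ e ∈ S1, τ e = 1 → ∑ e ∈ S2, τ e = 1 → False

theorem sum_switch {ends : E → Bool → V} {S : Finset E} (τ : E → ZMod 2) (p : V → ZMod 2)
    (h : ∀ v, bd ends S v = 0) :
    ∑ e ∈ S, (τ e + (p (ends e false) + p (ends e true))) = ∑ e ∈ S, τ e := by
  rw [Finset.sum_add_distrib, ← dot]
  simp [h]

theorem three {ends : E → Bool → V} {A : Finset E} {τ : E → ZMod 2} {a b c : E}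
    (hA : ∀ v, bd ends A v = 0) (hnd : NoDisj ends A τ)
    (ha : a ∈ A) (hb : b ∈ A) (hc : c ∈ A) (hab : a ≠ b) (hac : a ≠ c) (hbc : b ≠ c)
    (hτ : ∀ f ∈ A, τ f = if f ∈ ({a, b, c} : Finset E) then 1 else 0)
    (i j : Bool) (hij : ends a i = ends b j) : Conc ends A τ := by
  classical
  by_contra hconc
  set N : Finset E := {a, b, c} with hN
  have hNA : N ⊆ A := by
    intro x hx; simp only [hN, Finset.mem_insert, Finset.mem_singleton] at hx
    rcases hx with rfl | rfl | rfl <;> assumption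
  have hNc : N.card = 3 := Finset.card_eq_three.2 ⟨a, b, c, hab, hac, hbc, rfl⟩
  have hsum : ∑ e ∈ A, τ e = 1 := by
    rw [Finset.sum_congr rfl hτ, Finset.sum_ite_mem, Finset.inter_eq_right.2 hNA]
    simp [hNc]; decide
  have hcut : ∀ X : Finset V, (cut ends N X).card ≤ (cut ends (A \ N) X).card := by
    intro X
    by_contra hlt
    push Not at hlt
    let p : V → ZMod 2 := fun v => if v ∈ X then 1 else 0
    let σ : E → ZMod 2 := fun f => τ f + (p (ends f false) + p (ends f true))
    have hσ : ∀ f ∈ A, σ f = 1 ↔ f ∈ (N \ cut ends N X) ∪ cut ends (A \ N) X := by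
      intro f hf
      simp only [σ, p, hτ f hf, cut, Finset.mem_union, Finset.mem_sdiff, Finset.mem_filter, hf]
      by_cases h1 : f ∈ N <;> by_cases h2 : ends f false ∈ X <;> by_cases h3 : ends f true ∈ X <;>
        simp [h1, h2, h3] <;> decide
    have hsub : (N \ cut ends N X) ∪ cut ends (A \ N) X ⊆ A := by
      refine Finset.union_subset (Finset.sdiff_subset.trans hNA) ?_
      exact (Finset.filter_subset _ _).trans Finset.sdiff_subset
    have hσ' : ∀ f ∈ A, σ f = if f ∈ (N \ cut ends N X) ∪ cut ends (A \ N) X then 1 else 0 := by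
      intro f hf
      split_ifs with h
      · exact (hσ f hf).2 h
      · exact (z2 _).resolve_right fun h' => h ((hσ f hf).1 h')
    have hs : ∑ e ∈ A, σ e = 1 := by rw [← hsum]; exact sum_switch τ p hA
    rw [Finset.sum_congr rfl hσ', Finset.sum_ite_mem, Finset.inter_eq_right.2 hsub] at hs
    simp only [Finset.sum_const, nsmul_eq_mul, mul_one] at hs
    have hle : ((N \ cut ends N X) ∪ cut ends (A \ N) X).card < 3 := by
      have h1 := Finset.card_union_le (N \ cut ends N X) (cut ends (A \ N) X)
      have h2 := Finset.card_sdiff_add_card_eq_card (show cut ends N X ⊆ N from Finset.filter_subset _ _)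
      omega
    have h1 : ((N \ cut ends N X) ∪ cut ends (A \ N) X).card = 1 := by
      generalize ((N \ cut ends N X) ∪ cut ends (A \ N) X).card = n at hs hle
      interval_cases n
      · simp at hs
      · rfl
      · exact absurd hs (by decide)
    obtain ⟨e, he⟩ := Finset.card_eq_one.1 h1
    rw [he] at hσ' hsub
    exact hconc ⟨p, e, hsub (by simp), fun f hf => by simpa using hσ' f hf⟩
  have haN : a ∈ N := by simp [hN]
  have hbN : b ∈ N := by simp [hN]
  have mem_cut : ∀ (f : E) (k : Bool) (X : Finset V), f ∈ N →
      (f ∈ cut ends N X ↔ ¬ (ends f k ∈ X ↔ ends f (!k) ∈ X)) := by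
    intro f k X hf
    cases k <;> simp [cut, hf, iff_comm]
  have hgood : Good ends (A \ N) (ends a (!i)) (ends b (!j)) (ends a i) := by
    apply menger
    · intro X hX hu
      have := hcut X
      rw [hX, Finset.card_empty, Nat.le_zero, Finset.card_eq_zero] at this
      have h1 := (mem_cut a i X haN).not.1 (by simp [this])
      have h2 := (mem_cut b j X hbN).not.1 (by simp [this])
      rw [hij] at h1
      tauto
    · intro X hv hu hw
      refine lt_of_lt_of_le ?_ (hcut X)
      rw [Finset.one_lt_card]
      refine ⟨a, (mem_cut a i X haN).2 (by tauto), b, (mem_cut b j X hbN).2 ?_, hab⟩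
      rw [← hij]; tauto
  obtain ⟨D1, D2, hD1, hD2, hd, t1, t2⟩ := hgood
  have hN1 : ∀ x ∈ N, x ∉ D1 := fun x hx h => (Finset.mem_sdiff.1 (hD1 h)).2 hx
  have hN2 : ∀ x ∈ N, x ∉ D2 := fun x hx h => (Finset.mem_sdiff.1 (hD2 h)).2 hx
  have c1 := Tr.cons a i D1 _ (hN1 a haN) t1
  rw [hij] at t2
  have c2 := Tr.cons b j D2 _ (hN2 b hbN) t2.symm
  have hz : ∀ D ⊆ A \ N, ∑ e ∈ D, τ e = 0 := by
    intro D hD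
    refine Finset.sum_eq_zero fun e he => ?_
    have := Finset.mem_sdiff.1 (hD he)
    rw [hτ e this.1, if_neg this.2]
  refine hnd (insert a D1) (insert b D2) ?_ ?_ ?_ ?_ ?_ ?_ ?_
  · exact Finset.insert_subset ha (hD1.trans Finset.sdiff_subset)
  · exact Finset.insert_subset hb (hD2.trans Finset.sdiff_subset)
  · simp [Finset.disjoint_insert_left, Finset.disjoint_insert_right, hab.symm, hN1 b hbN,
      hN2 a haN, hd]
  · intro v; rw [c1.bd, z2_add_self]
  · intro v; rw [c2.bd, z2_add_self]
  · rw [Finset.sum_insert (hN1 a haN), hz _ hD1, hτ a ha, if_pos haN, add_zero]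
  · rw [Finset.sum_insert (hN2 b hbN), hz _ hD2, hτ b hb, if_pos hbN, add_zero]

theorem core (n : ℕ) : ∀ (ends : E → Bool → V) (A : Finset E) (τ : E → ZMod 2), A.card = n →
    (∀ v, bd ends A v = 0) → ∑ e ∈ A, τ e = 1 → NoDisj ends A τ → Conc ends A τ := by
  induction n with
  | zero =>
    intro ends A τ hn hA hs hnd
    rw [Finset.card_eq_zero] at hn
    simp [hn] at hs
  | succ n ih =>
    intro ends A τ hn hA hs hnd
    by_cases hadj : ∃ e1 ∈ A, ∃ e2 ∈ A, e1 ≠ e2 ∧ ∃ i j, ends e1 i = ends e2 j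
    · obtain ⟨e1, h1, e2, h2, hne, i, j, hij⟩ := hadj
      let ends' : E → Bool → V := Function.update ends e1
        (fun k => if k = false then ends e1 (!i) else ends e2 (!j))
      let τ' : E → ZMod 2 := Function.update τ e1 (τ e1 + τ e2)
      let L : Finset E → Finset E := fun S => if e1 ∈ S then insert e2 S else S
      have key : ∀ (W : E → ZMod 2) (W' : E → ZMod 2), (∀ f, f ≠ e1 → W' f = W f) →
          W' e1 = W e1 + W e2 → ∀ S, e2 ∉ S → ∑ e ∈ L S, W e = ∑ e ∈ S, W' e := by
        intro W W' hW hW1 S hS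
        by_cases he : e1 ∈ S
        · simp only [L, if_pos he]
          rw [Finset.sum_insert hS, ← Finset.add_sum_erase _ _ he, ← Finset.add_sum_erase _ W' he,
            hW1]
          have : ∑ e ∈ S.erase e1, W' e = ∑ e ∈ S.erase e1, W e :=
            Finset.sum_congr rfl fun x hx => hW x (Finset.ne_of_mem_erase hx)
          rw [this]; ring
        · simp only [L, if_neg he]
          refine Finset.sum_congr rfl fun x hx => (hW x ?_).symm
          rintro rfl; exact he hx
      have kbd : ∀ S, e2 ∉ S → ∀ v, bd ends (L S) v = bd ends' S v := by
        intro S hS v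
        unfold bd
        refine key _ _ ?_ ?_ S hS
        · intro f hf; simp [ends', hf]
        · simp only [ends', Function.update_self, if_true, if_false, Bool.true_eq_false]
          have e1' := bd_single ends e1 i v
          have e2' := bd_single ends e2 j v
          simp only [bd, Finset.sum_singleton] at e1' e2'
          rw [e1', e2', hij]
          generalize (if ends e2 j = v then (1 : ZMod 2) else 0) = x
          generalize (if ends e1 (!i) = v then (1 : ZMod 2) else 0) = y
          generalize (if ends e2 (!j) = v then (1 : ZMod 2) else 0) = z
          revert x y z; decide
      have ksum : ∀ S, e2 ∉ S → ∑ e ∈ L S, τ e = ∑ e ∈ S, τ' e := by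
        refine key _ _ ?_ ?_
        · intro f hf; simp [τ', hf]
        · simp [τ']
      have hLA : L (A.erase e2) = A := by
        simp only [L, Finset.mem_erase, hne, h1, ne_eq, not_false_eq_true, true_and, if_true]
        exact Finset.insert_erase h2
      have hLsub : ∀ S, S ⊆ A.erase e2 → L S ⊆ A := by
        intro S hS
        have := hS.trans (Finset.erase_subset _ _)
        simp only [L]; split_ifs
        · exact Finset.insert_subset h2 this
        · exact this
      have hnot : ∀ S, S ⊆ A.erase e2 → e2 ∉ S := fun S hS h => by simpa using hS h
      have hC : Conc ends' (A.erase e2) τ' := by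
        apply ih
        · rw [Finset.card_erase_of_mem h2, hn]; rfl
        · intro v; rw [← kbd _ (by simp), hLA, hA]
        · rw [← ksum _ (by simp), hLA, hs]
        · intro S1 S2 hS1 hS2 hd hb1 hb2 ht1 ht2
          have n1 := hnot S1 hS1
          have n2 := hnot S2 hS2
          refine hnd (L S1) (L S2) (hLsub _ hS1) (hLsub _ hS2) ?_ ?_ ?_ ?_ ?_
          · have := Finset.disjoint_left.1 hd
            simp only [L]
            split_ifs with q1 q2 q2
            · exact absurd q2 (this q1)
            · simp [Finset.disjoint_insert_left, n2, hd]
            · simp [Finset.disjoint_insert_right, n1, hd]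
            · exact hd
          · intro v; rw [kbd _ n1, hb1]
          · intro v; rw [kbd _ n2, hb2]
          · rw [ksum _ n1, ht1]
          · rw [ksum _ n2, ht2]
      obtain ⟨p, e', he', hp⟩ := hC
      let σ : E → ZMod 2 := fun f => τ f + (p (ends f false) + p (ends f true))
      have hσ : ∀ f ∈ A, f ≠ e1 → f ≠ e2 → σ f = if f = e' then 1 else 0 := by
        intro f hf hf1 hf2
        have := hp f (Finset.mem_erase.2 ⟨hf2, hf⟩)
        simpa [ends', τ', hf1] using this
      have hσ12 : σ e1 + σ e2 = if e1 = e' then 1 else 0 := by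
        rw [← hp e1 (Finset.mem_erase.2 ⟨hne, h1⟩)]
        simp only [σ, ends', τ', Function.update_self, if_true, if_false, Bool.true_eq_false]
        have q1 : p (ends e1 false) + p (ends e1 true) = p (ends e1 i) + p (ends e1 (!i)) := by
          cases i <;> simp [add_comm]
        have q2 : p (ends e2 false) + p (ends e2 true) = p (ends e2 j) + p (ends e2 (!j)) := by
          cases j <;> simp [add_comm]
        rw [q1, q2, hij]
        generalize p (ends e2 j) = x
        generalize p (ends e1 (!i)) = y
        generalize p (ends e2 (!j)) = z
        generalize τ e1 = s
        generalize τ e2 = t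
        revert x y z s t; decide
      have he'2 : e' ≠ e2 := Finset.ne_of_mem_erase he'
      have he'A : e' ∈ A := Finset.mem_of_mem_erase he'
      by_cases hee : e1 = e'
      · subst hee
        rw [if_pos rfl] at hσ12
        rcases z2 (σ e1) with q | q
        · rw [q, zero_add] at hσ12
          refine ⟨p, e2, h2, fun f hf => ?_⟩
          change σ f = _
          by_cases hf2 : f = e2
          · rw [hf2, if_pos rfl, hσ12]
          · rw [if_neg hf2]
            by_cases hf1 : f = e1
            · rw [hf1, q]
            · rw [hσ f hf hf1 hf2, if_neg hf1]
        · have q2 : σ e2 = 0 := by rw [q] at hσ12; simpa using hσ12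
          refine ⟨p, e1, h1, fun f hf => ?_⟩
          change σ f = _
          by_cases hf2 : f = e2
          · rw [hf2, if_neg hne.symm, q2]
          · by_cases hf1 : f = e1
            · rw [hf1, q, if_pos rfl]
            · rw [hσ f hf hf1 hf2]
      · rw [if_neg hee] at hσ12
        rcases z2 (σ e1) with q | q
        · rw [q, zero_add] at hσ12
          refine ⟨p, e', he'A, fun f hf => ?_⟩
          change σ f = _
          by_cases hf2 : f = e2
          · rw [hf2, if_neg he'2.symm, hσ12]
          · by_cases hf1 : f = e1
            · rw [hf1, q, if_neg hee]
            · rw [hσ f hf hf1 hf2]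
        · have q2 : σ e2 = 1 := by
            rcases z2 (σ e2) with h | h
            · rw [q, h] at hσ12; simp at hσ12
            · exact h
          have hnd' : NoDisj ends A σ := by
            intro S1 S2 hS1 hS2 hd hb1 hb2 ht1 ht2
            refine hnd S1 S2 hS1 hS2 hd hb1 hb2 ?_ ?_
            · rw [← ht1]; exact (sum_switch τ p hb1).symm
            · rw [← ht2]; exact (sum_switch τ p hb2).symm
          obtain ⟨p', e, he, hpe⟩ := three hA hnd' h1 h2 he'A hne hee he'2.symm (by
            intro f hf
            by_cases hf1 : f = e1
            · rw [hf1, q]; simp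
            by_cases hf2 : f = e2
            · rw [hf2, q2]; simp
            rw [hσ f hf hf1 hf2]; simp [hf1, hf2]) i j hij
          refine ⟨fun v => p v + p' v, e, he, fun f hf => ?_⟩
          rw [← hpe f hf]
          simp only [σ]; ring
    · push Not at hadj
      have hloop : ∀ e ∈ A, ∀ v, bd ends {e} v = 0 := by
        intro e he
        have hl : ends e false = ends e true := by
          by_contra hl
          have h := hA (ends e false)
          rw [bd, Finset.sum_eq_single_of_mem e he] at h
          · simp [Ne.symm hl] at h
          · intro f hf hfe
            simp [hadj f hf e he hfe]
        intro v
        simp [bd, hl, z2_add_self]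
      obtain ⟨e, he, hte⟩ : ∃ e ∈ A, τ e ≠ 0 := by
        apply Finset.exists_ne_zero_of_sum_ne_zero
        rw [hs]; decide
      have hte1 := (z2 (τ e)).resolve_left hte
      refine ⟨fun _ => 0, e, he, fun f hf => ?_⟩
      simp only [add_zero]
      split_ifs with hfe
      · rw [hfe, hte1]
      · refine (z2 _).resolve_right fun h => ?_
        exact hnd {f} {e} (by simpa) (by simpa) (by simpa using hfe) (hloop f hf) (hloop e he)
          (by simpa) (by simpa)

theorem reach_of_bd (ends : E → Bool → V) (T : Finset E) (x y : V) (hne : x ≠ y)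
    (h : ∀ z, bd ends T z = (if x = z then 1 else 0) + (if y = z then 1 else 0)) :
    Relation.ReflTransGen (Adj ends T) x y := by
  classical
  by_contra hc
  let p : V → ZMod 2 := fun z => if Relation.ReflTransGen (Adj ends T) x z then 1 else 0
  have hd := dot ends T p
  have h1 : ∑ v, p v * bd ends T v = p x + p y := by
    simp_rw [h, mul_add, Finset.sum_add_distrib]
    simp
  have h2 : ∑ e ∈ T, (p (ends e false) + p (ends e true)) = 0 := by
    refine Finset.sum_eq_zero fun e he => ?_
    have : Relation.ReflTransGen (Adj ends T) x (ends e false) ↔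
        Relation.ReflTransGen (Adj ends T) x (ends e true) :=
      ⟨fun h => h.tail ⟨e, he, false, rfl, rfl⟩, fun h => h.tail ⟨e, he, true, rfl, rfl⟩⟩
    simp only [p, this]
    exact z2_add_self _
  rw [h1, h2] at hd
  simp [p, hc, Relation.ReflTransGen.refl] at hd

def val (ends : E → Bool → V) (S : Finset E) (v : V) : ℕ :=
  ∑ e ∈ S, ((if ends e false = v then 1 else 0) + (if ends e true = v then 1 else 0))

theorem val_eq (G : SignedGraph V E) (S : Finset E) (v : V) :
    G.valencyOn S v = val G.ends S v := by
  unfold SignedGraph.valencyOn val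
  rw [Finset.card_filter, Fintype.sum_prod_type, ← Finset.sum_filter_add_sum_filter_not
    (Finset.univ : Finset E) (fun e => e ∈ S)]
  rw [Finset.sum_eq_zero (s := Finset.univ.filter fun e => e ∉ S)]
  · rw [add_zero, Finset.filter_mem_eq_inter, Finset.univ_inter]
    refine Finset.sum_congr rfl fun e he => ?_
    rw [Fintype.sum_bool]
    simp only [he, true_and]
    exact add_comm _ _
  · intro e he
    simp only [Finset.mem_filter, Finset.mem_univ, true_and] at he
    simp [he]

theorem val_cast (ends : E → Bool → V) (S : Finset E) (v : V) :
    ((val ends S v : ℕ) : ZMod 2) = bd ends S v := by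
  unfold val bd
  push_cast
  rfl

theorem bd_symmDiff_single (ends : E → Bool → V) (S : Finset E) (e : E) (v : V) :
    bd ends (symmDiff S {e}) v = bd ends S v + bd ends {e} v := by
  by_cases h : e ∈ S
  · have : symmDiff S {e} = S.erase e := by
      ext x; by_cases hx : x = e <;> simp [Finset.mem_symmDiff, hx, h]
    rw [this]
    have h2 : bd ends S v = bd ends {e} v + bd ends (S.erase e) v := by
      simp only [bd, Finset.sum_singleton]
      exact (Finset.add_sum_erase _ _ h).symm
    rw [h2, add_right_comm, z2_add_self, zero_add]
  · have : symmDiff S {e} = S ∪ {e} := by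
      ext x; by_cases hx : x = e <;> simp [Finset.mem_symmDiff, hx, h]
    rw [this, bd_disj_union _ (by simpa using h)]

theorem first_hit (ends : E → Bool → V) (C : Finset E) (v y : V)
    (h : Relation.ReflTransGen (Adj ends C) y v) (hy : y ≠ v) :
    ∃ T ⊆ C, (∀ z, bd ends T z = (if y = z then 1 else 0) + (if v = z then 1 else 0)) ∧
      val ends T v = 1 := by
  induction h using Relation.ReflTransGen.head_induction_on with
  | refl => exact absurd rfl hy
  | head h' _ ih =>
    obtain ⟨e, he, i, rfl, rfl⟩ := h'
    by_cases hv : ends e (!i) = v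
    · refine ⟨{e}, by simpa, fun z => ?_, ?_⟩
      · rw [bd_single ends e i, hv]
      · cases i <;> simp_all [val]
    · obtain ⟨T, hT, hb, hval⟩ := ih hv
      refine ⟨symmDiff T {e}, ?_, fun z => ?_, ?_⟩
      · intro x hx
        rcases Finset.mem_symmDiff.1 hx with h | h
        · exact hT h.1
        · rw [Finset.mem_singleton.1 h.1]; exact he
      · rw [bd_symmDiff_single, hb, bd_single ends e i]
        generalize (if ends e i = z then (1 : ZMod 2) else 0) = a
        generalize (if ends e (!i) = z then (1 : ZMod 2) else 0) = b
        generalize (if v = z then (1 : ZMod 2) else 0) = c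
        revert a b c; decide
      · rw [← hval]
        have h1 : ends e false ≠ v := by cases i <;> simp_all
        have h2 : ends e true ≠ v := by cases i <;> simp_all
        unfold val
        rw [← Finset.sum_filter_add_sum_filter_not T (fun x => x = e),
          ← Finset.sum_filter_add_sum_filter_not (symmDiff T {e}) (fun x => x = e)]
        congr 1
        · rw [Finset.sum_eq_zero, Finset.sum_eq_zero]
          · intro x hx
            rw [(Finset.mem_filter.1 hx).2]; simp [h1, h2]
          · intro x hx
            rw [(Finset.mem_filter.1 hx).2]; simp [h1, h2]
        · refine Finset.sum_congr ?_ fun _ _ => rfl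
          ext x
          by_cases hx : x = e <;> simp [Finset.mem_symmDiff, hx]

theorem circuit_of_min (G : SignedGraph V E) (C : Finset E) (hne : C.Nonempty)
    (hb : ∀ v, bd G.ends C v = 0)
    (hmin : ∀ D ⊆ C, D.Nonempty → (∀ v, bd G.ends D v = 0) → D = C) : G.IsCircuit C := by
  classical
  refine ⟨hne, ?_, ?_⟩
  · intro x hx y hy
    simp only [SignedGraph.suppV, Finset.mem_filter, Finset.mem_univ, true_and] at hx hy
    change Relation.ReflTransGen (Adj G.ends C) x y
    let R := Relation.ReflTransGen (Adj G.ends C) x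
    have hR : ∀ e ∈ C, ∀ i j, R (G.ends e i) → R (G.ends e j) := by
      intro e he i j h
      by_cases hij : j = i
      · rwa [hij]
      · have : j = !i := by cases i <;> cases j <;> simp_all
        rw [this]
        exact h.tail ⟨e, he, i, rfl, rfl⟩
    have hD := hmin (C.filter fun e => R (G.ends e false)) (Finset.filter_subset _ _) ?_ ?_
    · obtain ⟨e, he, i, rfl⟩ := hy
      rw [← hD, Finset.mem_filter] at he
      exact hR e he.1 false i he.2
    · obtain ⟨e, he, i, rfl⟩ := hx
      exact ⟨e, Finset.mem_filter.2 ⟨he, hR e he i false .refl⟩⟩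
    · intro v
      by_cases hv : R v
      · rw [← hb v]
        unfold bd
        rw [Finset.sum_filter]
        refine Finset.sum_congr rfl fun e he => ?_
        split_ifs with h <;> try rfl
        all_goals exfalso; apply h
        all_goals first
          | (apply hR e he false false; simp_all; done)
          | (apply hR e he true false; simp_all; done)
      · refine Finset.sum_eq_zero fun e he => ?_
        rw [Finset.mem_filter] at he
        have h1 : G.ends e false ≠ v := fun h => hv (h ▸ he.2)
        have h2 : G.ends e true ≠ v := fun h => hv (h ▸ hR e he.1 false true he.2)
        simp [h1, h2]
  · intro v hv
    simp only [SignedGraph.suppV, Finset.mem_filter, Finset.mem_univ, true_and] at hv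
    rw [val_eq]
    obtain ⟨e, he, i, hi⟩ := hv
    by_cases hl : G.ends e (!i) = v
    · have := hmin {e} (by simpa) (by simp) (fun z => by
        rw [bd_single G.ends e i, hi, hl, z2_add_self])
      rw [← this, val, Finset.sum_singleton]
      clear this
      cases i <;> simp_all
    · have hbe : ∀ z, bd G.ends (C.erase e) z =
          (if G.ends e (!i) = z then 1 else 0) + (if v = z then 1 else 0) := by
        intro z
        have h1 := bd_symmDiff_single G.ends C e z
        have : symmDiff C {e} = C.erase e := by
          ext x; by_cases hx : x = e <;> simp [Finset.mem_symmDiff, hx, he]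
        rw [this, hb, zero_add, bd_single G.ends e i, hi, add_comm] at h1
        exact h1
      obtain ⟨T, hT, hTb, hTv⟩ := first_hit G.ends (C.erase e) v _
        (reach_of_bd G.ends _ _ _ hl hbe) hl
      have heT : e ∉ T := fun h => by simpa using hT h
      have := hmin (insert e T) (Finset.insert_subset he (hT.trans (Finset.erase_subset _ _)))
        (by simp) (fun z => by
          rw [Finset.insert_eq, bd_disj_union _ (by simpa using heT), hTb,
            bd_single G.ends e i, hi, add_comm (if v = z then (1 : ZMod 2) else 0), z2_add_self])
      rw [← this, val, Finset.sum_insert heT]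
      change _ + val G.ends T v = 2
      rw [hTv]
      cases i <;> simp_all

noncomputable def tau (G : SignedGraph V E) (e : E) : ZMod 2 := if G.sign e = -1 then 1 else 0

theorem sign_iff (G : SignedGraph V E) (S : Finset E) :
    (G.signOf S = 1 ∧ ∑ e ∈ S, tau G e = 0) ∨ (G.signOf S = -1 ∧ ∑ e ∈ S, tau G e = 1) := by
  unfold SignedGraph.signOf
  induction S using Finset.induction_on with
  | empty => simp
  | insert a s ha ih =>
    rw [Finset.prod_insert ha, Finset.sum_insert ha]
    unfold tau at *
    rcases Int.units_eq_one_or (G.sign a) with h | h <;> rcases ih with ⟨h1, h2⟩ | ⟨h1, h2⟩ <;>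
      rw [h, h1, h2] <;> decide

theorem sign_neg (G : SignedGraph V E) (S : Finset E) :
    G.signOf S = -1 ↔ ∑ e ∈ S, tau G e = 1 := by
  rcases sign_iff G S with ⟨h1, h2⟩ | ⟨h1, h2⟩ <;> rw [h1, h2] <;> decide

theorem exists_circuit (G : SignedGraph V E) (n : ℕ) : ∀ S : Finset E, S.card = n →
    (∀ v, bd G.ends S v = 0) → ∑ e ∈ S, tau G e = 1 → ∃ C ⊆ S, G.IsUnbalancedCircuit C := by
  classical
  induction n using Nat.strong_induction_on with
  | _ n ih =>
    intro S hn hb hs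
    by_cases hD : ∃ D ⊆ S, D.Nonempty ∧ (∀ v, bd G.ends D v = 0) ∧ D ≠ S
    · obtain ⟨D, hDS, hDn, hDb, hne⟩ := hD
      have hu : D ∪ (S \ D) = S := Finset.union_sdiff_of_subset hDS
      have hsum : ∑ e ∈ D, tau G e + ∑ e ∈ S \ D, tau G e = 1 := by
        rw [← Finset.sum_union Finset.disjoint_sdiff, hu, hs]
      have hssub : D ⊂ S := Finset.ssubset_iff_subset_ne.2 ⟨hDS, hne⟩
      rcases z2 (∑ e ∈ D, tau G e) with h | h
      · rw [h, zero_add] at hsum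
        have hlt : (S \ D).card < n := by
          rw [← hn]; exact Finset.card_lt_card (Finset.sdiff_ssubset hDS hDn)
        obtain ⟨C, hC, hh⟩ := ih _ hlt (S \ D) rfl (fun v => by
          have := bd_disj_union G.ends (Finset.disjoint_sdiff : Disjoint D (S \ D)) v
          rw [hu, hb, hDb, zero_add] at this
          exact this.symm) hsum
        exact ⟨C, hC.trans Finset.sdiff_subset, hh⟩
      · obtain ⟨C, hC, hh⟩ := ih _ (hn ▸ Finset.card_lt_card hssub) D rfl hDb h
        exact ⟨C, hC.trans hDS, hh⟩
    · push Not at hD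
      refine ⟨S, subset_rfl, circuit_of_min G S ?_ hb hD, (sign_neg G S).2 hs⟩
      rw [Finset.nonempty_iff_ne_empty]
      rintro rfl
      simp at hs

theorem circuit_bd (G : SignedGraph V E) (C : Finset E) (h : G.IsCircuit C) (v : V) :
    bd G.ends C v = 0 := by
  rw [← val_cast, ← val_eq]
  by_cases hv : v ∈ G.suppV C
  · rw [h.2.2 v hv]; decide
  · have : G.valencyOn C v = 0 := by
      rw [val_eq]
      refine Finset.sum_eq_zero fun e he => ?_
      simp only [SignedGraph.suppV, Finset.mem_filter, Finset.mem_univ, true_and] at hv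
      push Not at hv
      simp [hv e he]
    rw [this]; rfl

end Aux14

open SignedGraph Finset in
/-- Let `G` be a signed eulerian graph with an odd number of
negative edges.  If any two unbalanced circuits of `G` have an edge in
common, then there exists an edge `e` of `G` that is contained in every
unbalanced circuit of `G`; in particular, `G` is tightly unbalanced. -/
theorem stmt14 {V E : Type} [Fintype V] [Fintype E] [DecidableEq V]
    [DecidableEq E] (G : SignedGraph V E) (hG : G.Eulerian)
    (hodd : Odd (G.negEdges univ).card)
    (hmeet : ∀ S₁ S₂ : Finset E,
      G.IsUnbalancedCircuit S₁ → G.IsUnbalancedCircuit S₂ →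
      (S₁ ∩ S₂).Nonempty) :
    (∃ e : E, ∀ S : Finset E, G.IsUnbalancedCircuit S → e ∈ S) ∧
    G.TightlyUnbalanced := by
  have hA : ∀ v, Aux14.bd G.ends univ v = 0 := by
    intro v
    rw [← Aux14.val_cast, ← Aux14.val_eq]
    exact (ZMod.natCast_eq_zero_iff_even).2 (hG.2 v)
  have hs : ∑ e ∈ (univ : Finset E), Aux14.tau G e = 1 := by
    have h : ∑ e ∈ (univ : Finset E), Aux14.tau G e = ((G.negEdges univ).card : ZMod 2) := by
      simp [Aux14.tau, SignedGraph.negEdges]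
    rw [h]
    exact (ZMod.natCast_eq_one_iff_odd).2 hodd
  have hnd : Aux14.NoDisj G.ends univ (Aux14.tau G) := by
    intro S1 S2 _ _ hd hb1 hb2 hs1 hs2
    obtain ⟨C1, hC1, h1⟩ := Aux14.exists_circuit G _ S1 rfl hb1 hs1
    obtain ⟨C2, hC2, h2⟩ := Aux14.exists_circuit G _ S2 rfl hb2 hs2
    obtain ⟨e, he⟩ := hmeet C1 C2 h1 h2
    rw [Finset.mem_inter] at he
    exact Finset.disjoint_left.1 hd (hC1 he.1) (hC2 he.2)
  obtain ⟨p, e, _, hp⟩ := Aux14.core _ G.ends univ (Aux14.tau G) rfl hA hs hnd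
  have key : ∀ S : Finset E, G.IsUnbalancedCircuit S → e ∈ S := by
    intro S hS
    have hb := Aux14.circuit_bd G S hS.1
    have h1 := (Aux14.sign_neg G S).1 hS.2
    rw [← Aux14.sum_switch (Aux14.tau G) p hb,
      Finset.sum_congr rfl (fun f _ => hp f (Finset.mem_univ f))] at h1
    by_contra he
    rw [Finset.sum_ite_eq' S e, if_neg he] at h1
    exact absurd h1 (by decide)
  refine ⟨⟨e, key⟩, ?_, e, ?_⟩
  · intro hbal
    obtain ⟨C, _, hC⟩ := Aux14.exists_circuit G _ univ rfl hA hs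
    have := hbal C hC.1
    rw [hC.2] at this
    exact absurd this (by decide)
  · intro S hS heS
    rcases Int.units_eq_one_or (G.signOf S) with h | h
    · exact h
    · exact absurd (key S ⟨hS, h⟩) heS
end

section
/- Every connected 6-regular graph of odd order can be decomposed into three edge-disjoint eulerian subgraphs sharing a common vertex such that each of them has an odd number of edges. -/
open Finset

/-- A multigraph on vertex type `V` with edge type `E`: each edge `e`
consists of two half-edges indexed by `Bool`; `ends e i` is the end-vertex at
which the half-edge `(e, i)` is attached (loops and multiple edges are
allowed). -/
structure Multigraph (V E : Type) where
  ends : E → Bool → V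

namespace Multigraph

variable {V E : Type} [Fintype V] [Fintype E] [DecidableEq V] [DecidableEq E]

/-- The valency of `v` in the subgraph spanned by the edge set `S`: the number
of half-edges of edges of `S` attached at `v` (a loop at `v` contributes
`2`). -/
def valencyOn (G : Multigraph V E) (S : Finset E) (v : V) : ℕ :=
  (univ.filter fun p : E × Bool => p.1 ∈ S ∧ G.ends p.1 p.2 = v).card

/-- The valency of a vertex in `G`. -/
def valency (G : Multigraph V E) (v : V) : ℕ :=
  G.valencyOn univ v

/-- The set of vertices incident with some edge of `S`. -/
def suppV (G : Multigraph V E) (S : Finset E) : Finset V :=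
  univ.filter fun v => ∃ e ∈ S, ∃ i : Bool, G.ends e i = v

/-- `u` and `v` are joined by an edge of `S`. -/
def AdjOn (G : Multigraph V E) (S : Finset E) (u v : V) : Prop :=
  ∃ e ∈ S, ∃ i : Bool, G.ends e i = u ∧ G.ends e (!i) = v

/-- The subgraph spanned by the edge set `S` is connected. -/
def ConnOn (G : Multigraph V E) (S : Finset E) : Prop :=
  ∀ u ∈ G.suppV S, ∀ v ∈ G.suppV S, Relation.ReflTransGen (G.AdjOn S) u v

/-- `G` is connected (as a graph on the whole vertex set `V`). -/
def Connected (G : Multigraph V E) : Prop :=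
  Nonempty V ∧ ∀ u v : V, Relation.ReflTransGen (G.AdjOn univ) u v

/-- The edge set `S` spans an eulerian subgraph of `G`: nonempty, connected,
with all valencies even. -/
def EulerianOn (G : Multigraph V E) (S : Finset E) : Prop :=
  S.Nonempty ∧ G.ConnOn S ∧ ∀ v : V, Even (G.valencyOn S v)

end Multigraph


namespace OddDec

variable {V E : Type}

/-- The coboundary of `χ` on the edge `e`. -/
def cr (en : E → Bool → V) (χ : V → ZMod 2) (e : E) : ZMod 2 :=
  χ (en e false) + χ (en e true)

/-- The number of edges of `T` at which `p` is one. -/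
def N (T : Finset E) (p : E → ZMod 2) : ℕ := ∑ e ∈ T, (p e).val

/-- Decomposition into three odd eulerian subgraphs rooted at `z`. -/
def Dec (en : E → Bool → V) (w : E → ZMod 2) (S : Finset E) (z : V) : Prop :=
  ∃ c : E → Fin 3, ∀ i : Fin 3,
    (∀ χ : V → ZMod 2, ∑ e ∈ S, (if c e = i then cr en χ e else 0) = 0) ∧
    ∑ e ∈ S, (if c e = i then w e else 0) = 1 ∧
    ∀ χ : V → ZMod 2, χ z = 0 → (∀ e ∈ S, c e = i → cr en χ e = 0) →
      ∀ e ∈ S, c e = i → ∀ j, χ (en e j) = 0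

theorem z2 (a : ZMod 2) : a = 0 ∨ a = 1 := by revert a; decide

theorem cr_add (en : E → Bool → V) (χ ψ : V → ZMod 2) (e : E) :
    cr en (fun v => χ v + ψ v) e = cr en χ e + cr en ψ e := by
  simp only [cr]; ring

theorem N_cast (T : Finset E) (p : E → ZMod 2) : ((N T p : ℕ) : ZMod 2) = ∑ e ∈ T, p e := by
  simp [N]

theorem N_add (T : Finset E) (p q : E → ZMod 2) :
    N T (fun e => p e + q e) + 2 * N T (fun e => p e * q e) = N T p + N T q := by
  simp only [N, Finset.mul_sum, ← Finset.sum_add_distrib]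
  refine Finset.sum_congr rfl fun e _ => ?_
  generalize p e = a
  generalize q e = b
  revert a b; decide

theorem N_congr {T : Finset E} {p q : E → ZMod 2} (h : ∀ e ∈ T, p e = q e) : N T p = N T q :=
  Finset.sum_congr rfl fun e he => by rw [h e he]

theorem N_even {T : Finset E} {p : E → ZMod 2} (h : ∑ e ∈ T, p e = 0) : Even (N T p) := by
  rw [← N_cast] at h
  exact (ZMod.natCast_eq_zero_iff_even).1 h

theorem N_pos {T : Finset E} {p : E → ZMod 2} {e : E} (he : e ∈ T) (h : p e = 1) :
    1 ≤ N T p := by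
  have : (p e).val ≤ N T p := Finset.single_le_sum (f := fun e => (p e).val) (by simp) he
  rw [h] at this
  exact this

variable [DecidableEq E]

/-- Merged ends. -/
def men (en : E → Bool → V) (e g : E) (i j : Bool) : E → Bool → V :=
  Function.update en e (Function.update (en e) i (en g (!j)))

/-- Merged function. -/
def mp (p : E → ZMod 2) (e g : E) : E → ZMod 2 := Function.update p e (p e + p g)

theorem cr_men {en : E → Bool → V} {e g : E} {i j : Bool} (h : en e i = en g j)
    (χ : V → ZMod 2) : cr (men en e g i j) χ = mp (cr en χ) e g := by
  funext x
  by_cases hx : x = e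
  · subst hx
    have h2 : ∀ a : ZMod 2, a + a = 0 := by decide
    cases i <;> cases j <;> simp [cr, men, mp, h]
    · linear_combination -h2 (χ (en g false))
    · linear_combination -h2 (χ (en g true))
    · linear_combination -h2 (χ (en g false))
    · linear_combination -h2 (χ (en g true))
  · simp [cr, men, mp, hx]

theorem sum_merge {M : Type} [AddCommMonoid M] {T : Finset E} {e g : E} (he : e ∈ T) (hg : g ∈ T)
    (hne : e ≠ g) (p : E → M) :
    ∑ x ∈ T.erase g, Function.update p e (p e + p g) x = ∑ x ∈ T, p x := by
  have he' : e ∈ T.erase g := Finset.mem_erase.2 ⟨hne, he⟩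
  rw [← Finset.add_sum_erase _ _ hg, ← Finset.add_sum_erase _ _ he',
    ← Finset.add_sum_erase _ _ he']
  have : ∑ x ∈ (T.erase g).erase e, Function.update p e (p e + p g) x =
      ∑ x ∈ (T.erase g).erase e, p x :=
    Finset.sum_congr rfl fun x hx => by simp [Finset.ne_of_mem_erase hx]
  rw [this]
  simp only [Function.update_self]
  rw [add_comm (p e) (p g), add_assoc]

theorem N_merge {T : Finset E} {e g : E} (he : e ∈ T) (hg : g ∈ T)
    (hne : e ≠ g) (p : E → ZMod 2) :
    N (T.erase g) (mp p e g) + 2 * (p e * p g).val = N T p := by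
  have := sum_merge he hg hne (fun x => (p x).val)
  have he' : e ∈ T.erase g := Finset.mem_erase.2 ⟨hne, he⟩
  rw [N, N, ← this, ← Finset.add_sum_erase _ _ he', ← Finset.add_sum_erase _ _ he']
  have : ∑ x ∈ (T.erase g).erase e, (mp p e g x).val =
      ∑ x ∈ (T.erase g).erase e, Function.update (fun x => (p x).val) e ((p e).val + (p g).val) x :=
    Finset.sum_congr rfl fun x hx => by simp [mp, Finset.ne_of_mem_erase hx]
  rw [this]
  have h3 : ∀ a b : ZMod 2, (a + b).val + 2 * (a * b).val = a.val + b.val := by decide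
  have := h3 (p e) (p g)
  simp only [mp, Function.update_self]
  omega

/-- Degree-type sums under merging. -/
theorem deg_merge {T : Finset E} {en : E → Bool → V} {e g : E} {i j : Bool} (he : e ∈ T)
    (hg : g ∈ T) (hne : e ≠ g) (h : en e i = en g j) (φ : V → ℕ) (h0 : φ (en e i) = 0) :
    ∑ x ∈ T.erase g, (φ (men en e g i j x false) + φ (men en e g i j x true)) =
    ∑ x ∈ T, (φ (en x false) + φ (en x true)) := by
  rw [← sum_merge he hg hne (fun x => φ (en x false) + φ (en x true))]
  refine Finset.sum_congr rfl fun x _ => ?_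
  by_cases hx : x = e
  · subst hx
    cases i <;> cases j <;> simp [men] at * <;> simp [← h, h0] <;> omega
  · simp [men, hx]

theorem Dec_merge {S : Finset E} {en : E → Bool → V} {w : E → ZMod 2} {e g : E} {i j : Bool}
    (he : e ∈ S) (hg : g ∈ S) (hne : e ≠ g) (h : en e i = en g j) {z : V}
    (hd : Dec (men en e g i j) (mp w e g) (S.erase g) z) : Dec en w S z := by
  obtain ⟨c, hc⟩ := hd
  refine ⟨Function.update c g (c e), fun t => ?_⟩
  have key : ∀ p : E → ZMod 2,
      ∑ x ∈ S.erase g, (if c x = t then mp p e g x else 0) =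
      ∑ x ∈ S, (if Function.update c g (c e) x = t then p x else 0) := by
    intro p
    rw [← sum_merge he hg hne (fun x => if Function.update c g (c e) x = t then p x else 0)]
    refine Finset.sum_congr rfl fun x hx => ?_
    have hxg := Finset.ne_of_mem_erase hx
    by_cases hx : x = e
    · subst hx
      simp [mp, hxg]
      split_ifs <;> simp
    · simp [mp, hx, hxg]
  obtain ⟨h1, h2, h3⟩ := hc t
  refine ⟨fun χ => ?_, ?_, ?_⟩
  · rw [← key, ← cr_men h]; exact h1 χ
  · rw [← key]; exact h2
  · intro χ hz hcr
    have h4 := h3 χ hz ?_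
    · -- ends
      have hE : c e = t → χ (en e i) = 0 ∧ χ (en e (!i)) = 0 ∧ χ (en g j) = 0 ∧
          χ (en g (!j)) = 0 := by
        intro hct
        have a1 := h4 e (Finset.mem_erase.2 ⟨hne, he⟩) hct
        have a2 := hcr g hg (by simpa using hct)
        have a3 := hcr e he (by simpa [hne] using hct)
        have a4 : χ (en g (!j)) = 0 := by simpa [men] using a1 i
        have a5 : χ (en e (!i)) = 0 := by
          have := a1 (!i)
          simpa [men] using this
        have a6 : χ (en g j) = 0 := by
          cases j <;> simp [cr] at a2 a4 <;> simpa [a4] using a2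
        rw [h]
        exact ⟨a6, a5, a6, a4⟩
      intro x hx hcx l
      by_cases hxg : x = g
      · subst hxg
        obtain ⟨q1, q2, q3, q4⟩ := hE (by simpa using hcx)
        cases j <;> cases l <;> first | exact q3 | exact q4
      · by_cases hxe : x = e
        · subst hxe
          obtain ⟨q1, q2, q3, q4⟩ := hE (by simpa [hxg] using hcx)
          cases i <;> cases l <;> first | exact q1 | exact q2
        · have := h4 x (Finset.mem_erase.2 ⟨hxg, hx⟩) (by simpa [hxg] using hcx) l
          simpa [men, hxe] using this
    · intro x hx hcx
      rw [cr_men h]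
      have hxg := Finset.ne_of_mem_erase hx
      have a1 := hcr x (Finset.mem_of_mem_erase hx) (by simpa [hxg] using hcx)
      by_cases hxe : x = e
      · subst hxe
        have a2 := hcr g hg (by simpa using hcx)
        simp [mp, a1, a2]
      · simp [mp, hxe, a1]

end OddDec

namespace OddDec

variable {V E : Type} [DecidableEq V] [DecidableEq E]

/-- The state of the core splitting process. -/
structure St (k : ℕ) (z : V) (B A X : Finset V) (en : E → Bool → V) (w : E → ZMod 2)
    (T : Finset E) : Prop where
  ends : ∀ e ∈ T, ∀ i, en e i ∈ X
  even : ∀ χ : V → ZMod 2, (∀ b ∈ B, χ b = χ z) → ∑ e ∈ T, cr en χ e = 0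
  cut : ∀ χ : V → ZMod 2, (∀ b ∈ B, χ b = χ z) → (∃ a ∈ A, χ a ≠ χ z) → 2 * k ≤ N T (cr en χ)
  par : ∑ e ∈ T, w e = (k : ZMod 2)
  fr : ∀ l : V → ZMod 2, (∀ b ∈ B, l b = l z) → k ≤ N T (fun e => w e + cr en l e)
  deg : ∑ e ∈ T, ((if en e false ∈ B then 1 else 0) + (if en e true ∈ B then 1 else 0)) = 2 * k

/-- The conclusion of the core splitting process. -/
def Concl (B : Finset V) (k : ℕ) (en : E → Bool → V) (w : E → ZMod 2) (T : Finset E) : Prop :=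
  ∃ (en' : E → Bool → V) (w' : E → ZMod 2) (T' : Finset E), T' ⊆ T ∧ T'.card = k ∧
    (∀ e ∈ T', w' e = 1 ∧ ∀ i, en' e i ∈ B) ∧
    (∀ e, e ∉ T → en' e = en e ∧ w' e = w e) ∧
    (∀ φ : V → ℕ, (∀ v, v ∉ B → φ v = 0) →
      ∑ e ∈ T', (φ (en' e false) + φ (en' e true)) = ∑ e ∈ T, (φ (en e false) + φ (en e true))) ∧
    ∀ R : Finset E, Disjoint R T → ∀ z ∈ B, Dec en' w' (R ∪ T') z → Dec en w (R ∪ T) z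

theorem Concl_merge {B : Finset V} {k : ℕ} {en : E → Bool → V} {w : E → ZMod 2} {T : Finset E}
    {e g : E} {i j : Bool} (he : e ∈ T) (hg : g ∈ T) (hne : e ≠ g) (h : en e i = en g j)
    (hB : en e i ∉ B) (hc : Concl B k (men en e g i j) (mp w e g) (T.erase g)) :
    Concl B k en w T := by
  obtain ⟨en', w', T', h1, h2, h3, h4, h5, h6⟩ := hc
  refine ⟨en', w', T', h1.trans (Finset.erase_subset _ _), h2, h3, ?_, ?_, ?_⟩
  · intro x hx
    have hxe : x ≠ e := fun h => hx (h ▸ he)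
    have := h4 x (fun h => hx (Finset.mem_of_mem_erase h))
    simpa [men, mp, hxe] using this
  · intro φ hφ
    rw [h5 φ hφ]
    exact deg_merge he hg hne h φ (hφ _ hB)
  · intro R hR z hz hd
    have hgR : g ∉ R := fun h => (Finset.disjoint_left.1 hR h hg)
    have h7 := h6 R (hR.mono_right (Finset.erase_subset _ _)) z hz hd
    have h8 : R ∪ T.erase g = (R ∪ T).erase g := by
      rw [Finset.erase_union_distrib, Finset.erase_eq_of_notMem hgR]
    rw [h8] at h7
    exact Dec_merge (Finset.mem_union_right _ he) (Finset.mem_union_right _ hg) hne h h7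

theorem mp_add (p q : E → ZMod 2) (e g : E) :
    (fun x => mp p e g x + mp q e g x) = mp (fun x => p x + q x) e g := by
  funext x
  by_cases hx : x = e
  · subst hx; simp [mp]; ring
  · simp [mp, hx]

theorem z2_one {a : ZMod 2} (h : a ≠ 0) : a = 1 := (z2 a).resolve_left h

theorem val_le_one (a : ZMod 2) : a.val ≤ 1 := by revert a; decide

theorem val_mul_one {a b : ZMod 2} (h : (a * b).val ≠ 0) : a = 1 ∧ b = 1 := by
  revert a b; decide

variable {k : ℕ} {z : V} {B A X : Finset V} {en : E → Bool → V} {w : E → ZMod 2} {T : Finset E}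

theorem St.cutEven (h : St k z B A X en w T) {χ : V → ZMod 2} (hχ : ∀ b ∈ B, χ b = χ z) :
    Even (N T (cr en χ)) := N_even (h.even χ hχ)

theorem St.frPar (h : St k z B A X en w T) {l : V → ZMod 2} (hl : ∀ b ∈ B, l b = l z) :
    N T (fun e => w e + cr en l e) % 2 = k % 2 := by
  have h1 := N_cast T (fun e => w e + cr en l e)
  rw [Finset.sum_add_distrib, h.even l hl, h.par, add_zero] at h1
  exact (ZMod.natCast_eq_natCast_iff' _ _ 2).1 h1

theorem St_merge (h : St k z B A X en w T) {e g : E} {i j : Bool}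
    (he : e ∈ T) (hg : g ∈ T) (hne : e ≠ g) (hy : en e i = en g j) (hB : en e i ∉ B)
    (hcut : ∀ χ : V → ZMod 2, (∀ b ∈ B, χ b = χ z) → (∃ a ∈ A, χ a ≠ χ z) →
      N T (cr en χ) = 2 * k → cr en χ e = 1 → cr en χ g = 1 → False)
    (hfr : ∀ l : V → ZMod 2, (∀ b ∈ B, l b = l z) → N T (fun e => w e + cr en l e) = k →
      w e + cr en l e = 1 → w g + cr en l g = 1 → False) :
    St k z B A X (men en e g i j) (mp w e g) (T.erase g) := by
  refine ⟨?_, ?_, ?_, ?_, ?_, ?_⟩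
  · intro x hx l
    by_cases hxe : x = e
    · subst hxe
      by_cases hl : l = i
      · subst hl; simpa [men] using h.ends g hg (!j)
      · simpa [men, hl] using h.ends x he l
    · simpa [men, hxe] using h.ends x (Finset.mem_of_mem_erase hx) l
  · intro χ hχ
    rw [cr_men hy, ← h.even χ hχ]
    exact sum_merge he hg hne (cr en χ)
  · intro χ hχ ha
    rw [cr_men hy]
    have h1 := N_merge he hg hne (cr en χ)
    have h2 := h.cut χ hχ ha
    obtain ⟨m, hm⟩ := h.cutEven hχ
    by_cases h0 : (cr en χ e * cr en χ g).val = 0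
    · omega
    · obtain ⟨p1, p2⟩ := val_mul_one h0
      have := hcut χ hχ ha
      have h4 := val_le_one (cr en χ e * cr en χ g)
      by_contra hlt
      exact this (by omega) p1 p2
  · rw [← h.par]; exact sum_merge he hg hne w
  · intro l hl
    rw [cr_men hy, mp_add]
    have h1 := N_merge he hg hne (fun x => w x + cr en l x)
    have h2 := h.fr l hl
    have h3 := h.frPar hl
    by_cases h0 : ((w e + cr en l e) * (w g + cr en l g)).val = 0
    · simp only [h0] at h1
      omega
    · obtain ⟨p1, p2⟩ := val_mul_one h0
      have h4 := val_le_one ((w e + cr en l e) * (w g + cr en l g))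
      by_contra hlt
      exact hfr l hl (by omega) p1 p2
  · rw [← h.deg]
    exact deg_merge he hg hne hy (fun v => if v ∈ B then 1 else 0) (by simp [hB])

/-- Base case of Lemma A. -/
theorem Concl_base (hz : z ∈ B) (h : St k z B A B en w T) : Concl B k en w T := by
  have h1 := h.deg
  have h2 : ∀ e ∈ T, ((if en e false ∈ B then 1 else 0) + (if en e true ∈ B then 1 else 0)) = 2 := by
    intro e he
    simp [h.ends e he]
  rw [Finset.sum_congr rfl h2] at h1
  have hc : T.card = k := by simp at h1; omega
  refine ⟨en, w, T, subset_rfl, hc, ?_, fun _ _ => ⟨rfl, rfl⟩, fun _ _ => rfl,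
    fun _ _ _ _ hd => hd⟩
  intro e he
  refine ⟨?_, h.ends e he⟩
  by_contra hw
  have h3 := h.fr (fun _ => 0) (by simp)
  have h4 : N T (fun e => w e + cr en (fun _ => 0) e) < ∑ x ∈ T, 1 := by
    refine Finset.sum_lt_sum (fun x _ => val_le_one _) ⟨e, he, ?_⟩
    have := (z2 (w e)).resolve_right hw
    simp [this, cr]
  simp at h4
  omega

end OddDec

namespace OddDec

variable {V E : Type} [DecidableEq V] [DecidableEq E]

/-- Indicator function of a vertex. -/
def ind (y : V) : V → ZMod 2 := fun v => if v = y then 1 else 0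

theorem ind_self (y : V) : ind y y = 1 := by simp [ind]

theorem ind_ne {y v : V} (h : v ≠ y) : ind y v = 0 := by simp [ind, h]

theorem cr_ind_one {en : E → Bool → V} {y : V} {e : E} (h : cr en (ind y) e = 1) :
    ∃ i, en e i = y ∧ en e (!i) ≠ y := by
  by_cases h0 : en e false = y <;> by_cases h1 : en e true = y
  · simp [cr, h0, h1] at h; exact absurd h (by generalize ind y y = a; revert a; decide)
  · exact ⟨false, h0, h1⟩
  · exact ⟨true, h1, h0⟩
  · simp [cr, ind, h0, h1] at h

theorem cr_ind_zero {en : E → Bool → V} {y : V} {e : E} (h : cr en (ind y) e ≠ 1)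
    (hl : ¬ (en e false = y ∧ en e true = y)) : ∀ i, en e i ≠ y := by
  by_cases h0 : en e false = y <;> by_cases h1 : en e true = y
  · exact absurd ⟨h0, h1⟩ hl
  · simp [cr, ind, h0, h1] at h
  · simp [cr, ind, h0, h1] at h
  · intro i; cases i <;> assumption

theorem cr_loop {en : E → Bool → V} {y : V} {e : E} (h0 : en e false = y) (h1 : en e true = y)
    (χ : V → ZMod 2) : cr en χ e = 0 := by
  simp only [cr, h0, h1]; generalize χ y = a; revert a; decide

theorem N_lt {T : Finset E} {p q : E → ZMod 2} (h : ∀ e ∈ T, p e = 1 → q e = 1) {e : E}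
    (he : e ∈ T) (hp : p e = 0) (hq : q e = 1) : N T p < N T q := by
  refine Finset.sum_lt_sum (fun x hx => ?_) ⟨e, he, ?_⟩
  · rcases z2 (p x) with h0 | h0
    · simp [h0]
    · rw [h0, h x hx h0]
  · rw [hp, hq]; decide

theorem N_exists {T : Finset E} {p : E → ZMod 2} (h : 0 < N T p) : ∃ e ∈ T, p e = 1 := by
  by_contra hc
  push Not at hc
  have : N T p = 0 := Finset.sum_eq_zero fun e he => by
    rw [(z2 (p e)).resolve_right (hc e he)]; rfl
  omega

theorem N_single {T : Finset E} {e : E} (p : E → ZMod 2) :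
    N T (fun x => p x * (if x = e then 1 else 0)) ≤ 1 := by
  by_cases he : e ∈ T
  · rw [N, Finset.sum_eq_single e]
    · exact val_le_one _
    · intro x _ hx; simp [hx]
    · intro h; exact absurd he h
  · rw [N, Finset.sum_eq_zero]
    · exact Nat.zero_le _
    · intro x hx
      have : x ≠ e := fun h => he (h ▸ hx)
      simp [this]

variable {k : ℕ} {z y : V} {B A : Finset V} {en : E → Bool → V} {w : E → ZMod 2} {T : Finset E}

theorem cr_const (h : St k z B A (insert y (A ∪ B)) en w T) (hyA : y ∉ A) (hyB : y ∉ B)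
    {ξ : V → ZMod 2} (hB : ∀ b ∈ B, ξ b = ξ z) (hA : ∀ a ∈ A, ξ a = ξ z) :
    ∀ e ∈ T, cr en ξ e = (ξ y + ξ z) * cr en (ind y) e := by
  have h2 : ∀ a : ZMod 2, a + a = 0 := by decide
  have hv : ∀ v ∈ insert y (A ∪ B), ξ v = ξ z + (ξ y + ξ z) * ind y v := by
    intro v hv
    by_cases hvy : v = y
    · subst hvy; rw [ind_self]; linear_combination -h2 (ξ z)
    · rw [ind_ne hvy]
      rcases Finset.mem_insert.1 hv with h1 | h1
      · exact absurd h1 hvy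
      · rcases Finset.mem_union.1 h1 with h1 | h1
        · rw [hA v h1]; ring
        · rw [hB v h1]; ring
  intro e he
  rw [cr, hv _ (h.ends e he false), hv _ (h.ends e he true), cr]
  linear_combination h2 (ξ z)

theorem fr_unique (h : St k z B A (insert y (A ∪ B)) en w T) (hyA : y ∉ A) (hyB : y ∉ B)
    {l₁ l₂ : V → ZMod 2} (h1 : ∀ b ∈ B, l₁ b = l₁ z) (h2 : ∀ b ∈ B, l₂ b = l₂ z)
    (n1 : N T (fun e => w e + cr en l₁ e) = k) (n2 : N T (fun e => w e + cr en l₂ e) = k)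
    {e₀ : E} (he : e₀ ∈ T) (o1 : w e₀ + cr en l₁ e₀ = 1) (o2 : w e₀ + cr en l₂ e₀ = 1) :
    (∀ e ∈ T, cr en l₂ e = cr en l₁ e) ∨
    (∀ e ∈ T, cr en l₂ e = cr en l₁ e + cr en (ind y) e) := by
  have t2 : ∀ a : ZMod 2, a + a = 0 := by decide
  have hB : ∀ b ∈ B, (fun v => l₁ v + l₂ v) b = (fun v => l₁ v + l₂ v) z := by
    intro b hb; simp only [h1 b hb, h2 b hb]
  have e1 := N_add T (fun e => w e + cr en l₁ e) (fun e => w e + cr en l₂ e)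
  have e2 : N T (fun e => (w e + cr en l₁ e) + (w e + cr en l₂ e)) =
      N T (cr en (fun v => l₁ v + l₂ v)) := N_congr fun e _ => by
    rw [cr_add]; linear_combination t2 (w e)
  have e3 : 1 ≤ N T (fun e => (w e + cr en l₁ e) * (w e + cr en l₂ e)) :=
    N_pos he (by rw [o1, o2]; rfl)
  have hA : ∀ a ∈ A, (fun v => l₁ v + l₂ v) a = (fun v => l₁ v + l₂ v) z := by
    by_contra hc
    push Not at hc
    have := h.cut _ hB hc
    omega
  have hcc := cr_const h hyA hyB hB hA
  rcases z2 ((fun v => l₁ v + l₂ v) y + (fun v => l₁ v + l₂ v) z) with h0 | h0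
  · left
    intro e he
    have := hcc e he
    rw [h0, cr_add] at this
    linear_combination this - t2 (cr en l₁ e)
  · right
    intro e he
    have := hcc e he
    rw [h0, cr_add] at this
    linear_combination this - t2 (cr en l₁ e)

theorem loop_good (hk : 1 ≤ k) (h : St k z B A (insert y (A ∪ B)) en w T) (hyA : y ∉ A)
    (hyB : y ∉ B) {e₀ : E} (he₀ : e₀ ∈ T) (p0 : en e₀ false = y) (p1 : en e₀ true = y)
    (hD : 2 * k ≤ N T (cr en (ind y))) :
    ∃ e ∈ T, cr en (ind y) e = 1 ∧ ∀ l : V → ZMod 2, (∀ b ∈ B, l b = l z) →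
      N T (fun e => w e + cr en l e) = k → w e + cr en l e = 1 → w e₀ + cr en l e₀ = 1 → False := by
  by_contra hcon
  push Not at hcon
  obtain ⟨e₁, he₁, hq₁⟩ := N_exists (T := T) (p := cr en (ind y)) (by omega)
  obtain ⟨l₁, hl₁, hn₁, ho₁, hoo₁, -⟩ := hcon e₁ he₁ hq₁
  have hq0 : cr en (ind y) e₀ = 0 := cr_loop p0 p1 _
  have key : ∀ e ∈ T, cr en (ind y) e = 1 → w e + cr en l₁ e = 1 := by
    intro e he hq
    obtain ⟨l₂, hl₂, hn₂, ho₂, hoo₂, -⟩ := hcon e he hq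
    rcases fr_unique h hyA hyB hl₁ hl₂ hn₁ hn₂ he₀ hoo₁ hoo₂ with hs | hs
    · rw [← hs e he]; exact ho₂
    · exfalso
      have e1 := N_add T (fun e => w e + cr en l₁ e) (cr en (ind y))
      have e2 : N T (fun e => (w e + cr en l₁ e) + cr en (ind y) e) = k := by
        rw [← hn₂]; exact N_congr fun x hx => by rw [hs x hx]; ring
      have e3 : N T (fun e => (w e + cr en l₁ e) * cr en (ind y) e) <
          N T (fun e => w e + cr en l₁ e) := by
        refine N_lt (fun x _ hx => ?_) he₀ (by rw [hq0]; ring) hoo₁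
        have : ∀ a b : ZMod 2, a * b = 1 → a = 1 := by decide
        exact this _ _ hx
      omega
  have := N_lt key he₀ hq0 hoo₁
  omega

theorem ind_B (hyB : y ∉ B) (hz : z ∈ B) : ∀ b ∈ B, ind y b = ind y z := by
  intro b hb
  have h1 : b ≠ y := fun h => hyB (h ▸ hb)
  have h2 : z ≠ y := fun h => hyB (h ▸ hz)
  rw [ind_ne h1, ind_ne h2]

theorem fr_half (h : St k z B A (insert y (A ∪ B)) en w T) (hz : z ∈ B) (hyA : y ∉ A)
    (hyB : y ∉ B) {e : E} (he : e ∈ T) (hq : cr en (ind y) e = 1) :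
    ∃ b : E → ZMod 2, b e = 1 ∧
      2 * N T (fun x => cr en (ind y) x * b x) ≤ N T (cr en (ind y)) ∧
      ∀ g ∈ T, ∀ l : V → ZMod 2, (∀ b ∈ B, l b = l z) →
        N T (fun e => w e + cr en l e) = k → w e + cr en l e = 1 → w g + cr en l g = 1 →
        b g = 1 := by
  by_cases hex : ∃ l : V → ZMod 2, (∀ b ∈ B, l b = l z) ∧
        N T (fun e => w e + cr en l e) = k ∧ w e + cr en l e = 1
  · obtain ⟨l, hl, hn, ho⟩ := hex
    refine ⟨fun e => w e + cr en l e, ho, ?_, ?_⟩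
    · have e1 := N_add T (cr en (ind y)) (fun e => w e + cr en l e)
      have e2 := h.fr (fun v => ind y v + l v) (by
        intro b hb; simp only [ind_B hyB hz b hb, hl b hb])
      have e3 : N T (fun x => w x + cr en (fun v => ind y v + l v) x) =
        N T (fun x => cr en (ind y) x + (w x + cr en l x)) := N_congr fun x _ => by
          rw [cr_add]; ring
      beta_reduce
      omega
    · intro g hg l₂ hl₂ hn₂ ho₂ hg₂
      rcases fr_unique h hyA hyB hl hl₂ hn hn₂ he ho ho₂ with hs | hs
      · show w g + cr en l g = 1
        rw [← hs g hg]; exact hg₂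
      · exfalso
        have := hs e he
        rw [hq] at this
        rw [this, ← add_assoc, ho] at ho₂
        exact absurd ho₂ (by decide)
  · push Not at hex
    refine ⟨fun x => if x = e then 1 else 0, by simp, ?_, ?_⟩
    · have e1 := N_single (T := T) (e := e) (cr en (ind y))
      have e2 := N_pos he hq
      obtain ⟨m, hm⟩ := h.cutEven (ind_B hyB hz)
      beta_reduce
      omega
    · intro g _ l hl hn ho _
      exact absurd ho (hex l hl hn)

theorem nc_iff {χ : V → ZMod 2} : (∃ a ∈ A, χ a ≠ χ z) ↔
    (∃ p ∈ insert z A, χ p = 0) ∧ (∃ p ∈ insert z A, χ p = 1) := by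
  constructor
  · rintro ⟨a, ha, hne⟩
    have ha' := Finset.mem_insert_of_mem (b := z) ha
    have hz' := Finset.mem_insert_self z A
    rcases z2 (χ a) with h1 | h1 <;> rcases z2 (χ z) with h2 | h2
    · exact absurd (h1.trans h2.symm) hne
    · exact ⟨⟨a, ha', h1⟩, ⟨z, hz', h2⟩⟩
    · exact ⟨⟨z, hz', h2⟩, ⟨a, ha', h1⟩⟩
    · exact absurd (h1.trans h2.symm) hne
  · rintro ⟨⟨p, hp, h0⟩, ⟨q, hq, h1⟩⟩
    by_contra hc
    push Not at hc
    have : ∀ p ∈ insert z A, χ p = χ z := by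
      intro p hp
      rcases Finset.mem_insert.1 hp with h | h
      · rw [h]
      · exact hc p h
    have e1 := this p hp
    have e2 := this q hq
    rw [h0] at e1; rw [h1, ← e1] at e2
    exact absurd e2 (by decide)

/-- Tight cuts through `e` avoiding `y`. -/
structure Tight (k : ℕ) (z y : V) (B A : Finset V) (en : E → Bool → V) (T : Finset E) (e : E)
    (ξ : V → ZMod 2) : Prop where
  cb : ∀ b ∈ B, ξ b = ξ z
  nc : ∃ a ∈ A, ξ a ≠ ξ z
  n : N T (cr en ξ) = 2 * k
  c : cr en ξ e = 1
  y0 : ξ y = 0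

theorem tight_or (h : St k z B A (insert y (A ∪ B)) en w T)
    {e : E} (he : e ∈ T) (hq : cr en (ind y) e = 1) {ξ₁ ξ₂ : V → ZMod 2}
    (t1 : Tight k z y B A en T e ξ₁) (t2 : Tight k z y B A en T e ξ₂) :
    Tight k z y B A en T e (fun v => ξ₁ v + ξ₂ v + ξ₁ v * ξ₂ v) := by
  obtain ⟨i, hi, hi'⟩ := cr_ind_one hq
  have endv : ∀ ξ : V → ZMod 2, cr en ξ e = ξ y + ξ (en e (!i)) := by
    intro ξ
    rw [← hi]
    cases i <;> simp [cr, add_comm]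
  have c1 : ξ₁ (en e (!i)) = 1 := by have := endv ξ₁; rw [t1.c, t1.y0, zero_add] at this; exact this.symm
  have c2 : ξ₂ (en e (!i)) = 1 := by have := endv ξ₂; rw [t2.c, t2.y0, zero_add] at this; exact this.symm
  have hv : ∃ v ∈ insert z A, ξ₁ v = 1 ∧ ξ₂ v = 1 := by
    have := h.ends e he (!i)
    rcases Finset.mem_insert.1 this with h1 | h1
    · exact absurd h1 hi'
    · rcases Finset.mem_union.1 h1 with h1 | h1
      · exact ⟨_, Finset.mem_insert_of_mem h1, c1, c2⟩
      · refine ⟨z, Finset.mem_insert_self _ _, ?_, ?_⟩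
        · rw [← t1.cb _ h1, c1]
        · rw [← t2.cb _ h1, c2]
  obtain ⟨v, hvA, v1, v2⟩ := hv
  obtain ⟨⟨p1, hp1, hp1'⟩, -⟩ := nc_iff.1 t1.nc
  obtain ⟨⟨p2, hp2, hp2'⟩, -⟩ := nc_iff.1 t2.nc
  have cbP : ∀ b ∈ B, (fun v => ξ₁ v * ξ₂ v) b = (fun v => ξ₁ v * ξ₂ v) z := fun b hb => by
    simp only [t1.cb b hb, t2.cb b hb]
  have cbO : ∀ b ∈ B, (fun v => ξ₁ v + ξ₂ v + ξ₁ v * ξ₂ v) b =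
      (fun v => ξ₁ v + ξ₂ v + ξ₁ v * ξ₂ v) z := fun b hb => by
    simp only [t1.cb b hb, t2.cb b hb]
  have cbD1 : ∀ b ∈ B, (fun v => ξ₁ v * (1 + ξ₂ v)) b = (fun v => ξ₁ v * (1 + ξ₂ v)) z :=
    fun b hb => by simp only [t1.cb b hb, t2.cb b hb]
  have cbD2 : ∀ b ∈ B, (fun v => ξ₂ v * (1 + ξ₁ v)) b = (fun v => ξ₂ v * (1 + ξ₁ v)) z :=
    fun b hb => by simp only [t1.cb b hb, t2.cb b hb]
  have hP := h.cut _ cbP (nc_iff.2 ⟨⟨p1, hp1, by simp [hp1']⟩, ⟨v, hvA, by simp [v1, v2]⟩⟩)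
  have ncO : ∃ a ∈ A, (fun v => ξ₁ v + ξ₂ v + ξ₁ v * ξ₂ v) a ≠
      (fun v => ξ₁ v + ξ₂ v + ξ₁ v * ξ₂ v) z := by
    refine nc_iff.2 ⟨?_, ⟨v, hvA, by simp only [v1, v2]; decide⟩⟩
    by_contra hall
    push Not at hall
    have b1 : ξ₁ p2 = 1 := by
      refine z2_one fun h0 => hall p2 hp2 ?_
      simp [h0, hp2']
    have b2 : ξ₂ p1 = 1 := by
      refine z2_one fun h0 => hall p1 hp1 ?_
      simp [h0, hp1']
    have hD1 := h.cut _ cbD1 (nc_iff.2 ⟨⟨v, hvA, by simp only [v1, v2]; decide⟩,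
      ⟨p2, hp2, by simp [b1, hp2']⟩⟩)
    have hD2 := h.cut _ cbD2 (nc_iff.2 ⟨⟨v, hvA, by simp only [v1, v2]; decide⟩,
      ⟨p1, hp1, by simp [b2, hp1']⟩⟩)
    have hlt : N T (cr en (fun v => ξ₁ v * (1 + ξ₂ v))) + N T (cr en (fun v => ξ₂ v * (1 + ξ₁ v))) <
        N T (cr en ξ₁) + N T (cr en ξ₂) := by
      simp only [N, ← Finset.sum_add_distrib]
      refine Finset.sum_lt_sum (fun x _ => ?_) ⟨e, he, ?_⟩
      · simp only [cr]
        generalize ξ₁ (en x false) = a₁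
        generalize ξ₁ (en x true) = a₂
        generalize ξ₂ (en x false) = a₃
        generalize ξ₂ (en x true) = a₄
        revert a₁ a₂ a₃ a₄; decide
      · simp only [endv, c1, c2, t1.y0, t2.y0]
        decide
    rw [t1.n, t2.n] at hlt
    omega
  have hO := h.cut _ cbO ncO
  have hle : N T (cr en (fun v => ξ₁ v * ξ₂ v)) +
      N T (cr en (fun v => ξ₁ v + ξ₂ v + ξ₁ v * ξ₂ v)) ≤ N T (cr en ξ₁) + N T (cr en ξ₂) := by
    simp only [N, ← Finset.sum_add_distrib]
    refine Finset.sum_le_sum (fun x _ => ?_)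
    simp only [cr]
    generalize ξ₁ (en x false) = a₁
    generalize ξ₁ (en x true) = a₂
    generalize ξ₂ (en x false) = a₃
    generalize ξ₂ (en x true) = a₄
    revert a₁ a₂ a₃ a₄; decide
  rw [t1.n, t2.n] at hle
  refine ⟨cbO, ncO, by omega, ?_, ?_⟩
  · simp only [endv, c1, c2, t1.y0, t2.y0]; decide
  · simp only [t1.y0, t2.y0]; decide

theorem tight_norm {e : E} {χ : V → ZMod 2} (h1 : ∀ b ∈ B, χ b = χ z)
    (h2 : ∃ a ∈ A, χ a ≠ χ z) (h3 : N T (cr en χ) = 2 * k) (h4 : cr en χ e = 1) :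
    ∃ ξ, Tight k z y B A en T e ξ ∧ ∀ x, cr en ξ x = cr en χ x := by
  have t2 : ∀ a : ZMod 2, a + a = 0 := by decide
  have hcr : ∀ x, cr en (fun v => χ v + χ y) x = cr en χ x := fun x => by
    simp only [cr]; linear_combination t2 (χ y)
  refine ⟨fun v => χ v + χ y, ⟨?_, ?_, ?_, ?_, ?_⟩, hcr⟩
  · intro b hb; simp only [h1 b hb]
  · obtain ⟨a, ha, hne⟩ := h2
    exact ⟨a, ha, fun h => hne (add_right_cancel h)⟩
  · rw [← h3]; exact N_congr fun x _ => hcr x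
  · rw [hcr, h4]
  · exact t2 _

theorem cut_half (h : St k z B A (insert y (A ∪ B)) en w T) (hz : z ∈ B) (hyA : y ∉ A)
    (hyB : y ∉ B) {e : E} (he : e ∈ T) (hq : cr en (ind y) e = 1) :
    ∃ a : E → ZMod 2, a e = 1 ∧
      2 * N T (fun x => cr en (ind y) x * a x) ≤ N T (cr en (ind y)) ∧
      ∀ g ∈ T, cr en (ind y) g = 1 → ∀ χ : V → ZMod 2, (∀ b ∈ B, χ b = χ z) →
        (∃ a ∈ A, χ a ≠ χ z) → N T (cr en χ) = 2 * k → cr en χ e = 1 → cr en χ g = 1 →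
        a g = 1 := by
  by_cases hex : ∃ ξ, Tight k z y B A en T e ξ
  · let D := N T (cr en (ind y))
    let t : (V → ZMod 2) → ℕ := fun ξ => N T (fun x => cr en (ind y) x * cr en ξ x)
    have hmin := WellFounded.has_min (measure (fun ξ : V → ZMod 2 => D - t ξ)).wf
      {ξ | Tight k z y B A en T e ξ} hex
    obtain ⟨ξ, hξ, hmax⟩ := hmin
    have htD : ∀ ξ, t ξ ≤ D := by
      intro ξ
      refine Finset.sum_le_sum fun x _ => ?_
      beta_reduce
      generalize cr en (ind y) x = a
      generalize cr en ξ x = b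
      revert a b; decide
    refine ⟨cr en ξ, hξ.c, ?_, ?_⟩
    · have e1 := N_add T (cr en (ind y)) (cr en ξ)
      have hyz : z ≠ y := fun h => hyB (h ▸ hz)
      have e2 := h.cut (fun v => ind y v + ξ v) (by
        intro b hb; simp only [ind_B hyB hz b hb, hξ.cb b hb]) (by
        obtain ⟨a, ha, hne⟩ := hξ.nc
        refine ⟨a, ha, ?_⟩
        have hya : a ≠ y := fun h => hyA (h ▸ ha)
        simpa [ind_ne hya, ind_ne hyz] using hne)
      have e3 : N T (cr en (fun v => ind y v + ξ v)) =
        N T (fun x => cr en (ind y) x + cr en ξ x) := N_congr fun x _ => by rw [cr_add]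
      have := hξ.n
      omega
    · intro g hg hqg χ h1 h2 h3 h4 h5
      obtain ⟨ξ₂, hξ₂, hs⟩ := tight_norm (y := y) h1 h2 h3 h4
      rw [← hs] at h5
      by_contra hne
      have h0 := (z2 _).resolve_right hne
      have hor := tight_or h he hq hξ hξ₂
      refine hmax _ hor ?_
      have hlt : t ξ < t (fun v => ξ v + ξ₂ v + ξ v * ξ₂ v) := by
        have hend : ∀ x, cr en (ind y) x = 1 → ∃ v, ∀ χ : V → ZMod 2, χ y = 0 →
            cr en χ x = χ v := by
          intro x hx
          obtain ⟨i, hi, -⟩ := cr_ind_one hx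
          refine ⟨en x (!i), fun χ hχ => ?_⟩
          rw [← hi] at hχ
          cases i <;> simp [cr, hχ]
        refine N_lt (fun x _ hx => ?_) hg (by rw [h0]; ring) ?_
        · have m1 : ∀ a b : ZMod 2, a * b = 1 → a = 1 ∧ b = 1 := by decide
          obtain ⟨x1, x2⟩ := m1 _ _ hx
          obtain ⟨v, hv⟩ := hend x x1
          rw [hv _ hξ.y0] at x2
          rw [x1, hv _ hor.y0]
          simp only [x2]
          generalize ξ₂ v = a
          revert a; decide
        · obtain ⟨v, hv⟩ := hend g hqg
          rw [hv _ hξ₂.y0] at h5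
          rw [hv _ hξ.y0] at h0
          rw [hqg, hv _ hor.y0]
          simp only [h0, h5]; decide
      have a1 := htD (fun v => ξ v + ξ₂ v + ξ v * ξ₂ v)
      show D - _ < D - _
      omega
  · push Not at hex
    refine ⟨fun x => if x = e then 1 else 0, by simp, ?_, ?_⟩
    · have e1 := N_single (T := T) (e := e) (cr en (ind y))
      have e2 := N_pos he hq
      obtain ⟨m, hm⟩ := h.cutEven (ind_B hyB hz)
      beta_reduce
      omega
    · intro g _ _ χ h1 h2 h3 h4 _
      obtain ⟨ξ, hξ, -⟩ := tight_norm (y := y) h1 h2 h3 h4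
      exact absurd hξ (hex ξ)

theorem pair_good (h : St k z B A (insert y (A ∪ B)) en w T) (hz : z ∈ B) (hyA : y ∉ A)
    (hyB : y ∉ B) {e : E} (he : e ∈ T) (hq : cr en (ind y) e = 1) :
    ∃ g ∈ T, e ≠ g ∧ cr en (ind y) g = 1 ∧
      (∀ χ : V → ZMod 2, (∀ b ∈ B, χ b = χ z) → (∃ a ∈ A, χ a ≠ χ z) →
        N T (cr en χ) = 2 * k → cr en χ e = 1 → cr en χ g = 1 → False) ∧
      (∀ l : V → ZMod 2, (∀ b ∈ B, l b = l z) → N T (fun e => w e + cr en l e) = k →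
        w e + cr en l e = 1 → w g + cr en l g = 1 → False) := by
  obtain ⟨a, ae, aD, ag⟩ := cut_half h hz hyA hyB he hq
  obtain ⟨b, be, bD, bg⟩ := fr_half h hz hyA hyB he hq
  by_contra hcon
  have key : ∀ g ∈ T, cr en (ind y) g = 1 → a g = 1 ∨ b g = 1 := by
    intro g hg hqg
    by_contra hno
    push Not at hno
    refine hcon ⟨g, hg, ?_, hqg, ?_, ?_⟩
    · rintro rfl; exact hno.1 ae
    · intro χ h1 h2 h3 h4 h5; exact hno.1 (ag g hg hqg χ h1 h2 h3 h4 h5)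
    · intro l h1 h2 h3 h4; exact hno.2 (bg g hg l h1 h2 h3 h4)
  have hlt : N T (cr en (ind y)) < N T (fun x => cr en (ind y) x * a x) +
      N T (fun x => cr en (ind y) x * b x) := by
    simp only [N, ← Finset.sum_add_distrib]
    refine Finset.sum_lt_sum (fun x hx => ?_) ⟨e, he, ?_⟩
    · have := key x hx
      revert this
      generalize cr en (ind y) x = p
      generalize a x = q
      generalize b x = r
      revert p q r; decide
    · simp only [hq, ae, be]; decide
  omega

theorem lemB (hk : 1 ≤ k) (hz : z ∈ B) (hyA : y ∉ A) (hyB : y ∉ B)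
    (hA : ∀ (en : E → Bool → V) (w : E → ZMod 2) (T : Finset E), St k z B A (A ∪ B) en w T →
      Concl B k en w T) :
    ∀ (n : ℕ) (en : E → Bool → V) (w : E → ZMod 2) (T : Finset E), T.card = n →
      St k z B A (insert y (A ∪ B)) en w T →
      ((∃ e ∈ T, en e false = y ∧ en e true = y) → 2 * k ≤ N T (cr en (ind y))) →
      Concl B k en w T := by
  intro n
  induction n with
  | zero =>
    intro en w T hT h _
    have : T = ∅ := Finset.card_eq_zero.1 hT
    subst this
    have := h.deg
    simp at this
    omega
  | succ n ih =>
    intro en w T hT h hD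
    by_cases hl : ∃ e ∈ T, en e false = y ∧ en e true = y
    · have hD' := hD hl
      obtain ⟨e₀, he₀, p0, p1⟩ := hl
      obtain ⟨e, he, hq, hgood⟩ := loop_good hk h hyA hyB he₀ p0 p1 hD'
      obtain ⟨i, hi, -⟩ := cr_ind_one hq
      have hne : e ≠ e₀ := by
        rintro rfl
        rw [cr_loop p0 p1] at hq
        exact absurd hq (by decide)
      have hm : en e i = en e₀ false := by rw [hi, p0]
      have hB' : en e i ∉ B := by rw [hi]; exact hyB
      refine Concl_merge he he₀ hne hm hB' (ih _ _ _ ?_ (St_merge h he he₀ hne hm hB' ?_ hgood) ?_)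
      · rw [Finset.card_erase_of_mem he₀, hT]; rfl
      · intro χ _ _ _ _ h5
        rw [cr_loop p0 p1] at h5
        exact absurd h5 (by decide)
      · intro _
        have := N_merge he he₀ hne (cr en (ind y))
        rw [cr_men hm]
        rw [cr_loop p0 p1 (ind y)] at this
        simp at this
        omega
    · by_cases hex : ∃ e ∈ T, cr en (ind y) e = 1
      · obtain ⟨e, he, hq⟩ := hex
        obtain ⟨g, hg, hne, hqg, h1, h2⟩ := pair_good h hz hyA hyB he hq
        obtain ⟨i, hi, hi'⟩ := cr_ind_one hq
        obtain ⟨j, hj, hj'⟩ := cr_ind_one hqg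
        have hm : en e i = en g j := by rw [hi, hj]
        have hB' : en e i ∉ B := by rw [hi]; exact hyB
        refine Concl_merge he hg hne hm hB' (ih _ _ _ ?_ (St_merge h he hg hne hm hB' h1 h2) ?_)
        · rw [Finset.card_erase_of_mem hg, hT]; rfl
        · rintro ⟨x, hx, x0, x1⟩
          exfalso
          by_cases hxe : x = e
          · subst hxe
            cases i
            · simp [men] at x0; exact hj' x0
            · simp [men] at x1; exact hj' x1
          · simp only [men, Function.update_of_ne hxe] at x0 x1
            exact hl ⟨x, Finset.mem_of_mem_erase hx, x0, x1⟩
      · push Not at hex hl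
        refine hA en w T ⟨?_, h.even, h.cut, h.par, h.fr, h.deg⟩
        intro e he i
        have := cr_ind_zero (hex e he) (fun hh => hl e he hh.1 hh.2) i
        exact (Finset.mem_insert.1 (h.ends e he i)).resolve_left this

theorem lemA (hk : 1 ≤ k) (hz : z ∈ B) : ∀ (n : ℕ) (A : Finset V), A.card = n → Disjoint A B →
    ∀ (en : E → Bool → V) (w : E → ZMod 2) (T : Finset E), St k z B A (A ∪ B) en w T →
      Concl B k en w T := by
  intro n
  induction n with
  | zero =>
    intro A hA _ en w T h
    have : A = ∅ := Finset.card_eq_zero.1 hA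
    subst this
    rw [Finset.empty_union] at h
    exact Concl_base hz h
  | succ n ih =>
    intro A hA hd en w T h
    obtain ⟨y, hy⟩ : A.Nonempty := by rw [← Finset.card_pos]; omega
    have hyB : y ∉ B := Finset.disjoint_left.1 hd hy
    have hyz : z ≠ y := fun h => hyB (h ▸ hz)
    refine lemB (A := A.erase y) (y := y) hk hz (Finset.notMem_erase y A) hyB
      (ih (A.erase y) ?_ (hd.mono_left (Finset.erase_subset _ _))) _ en w T rfl ?_ ?_
    · rw [Finset.card_erase_of_mem hy, hA]; rfl
    · have : insert y (A.erase y ∪ B) = A ∪ B := by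
        rw [← Finset.insert_union, Finset.insert_erase hy]
      rw [this]
      refine ⟨h.ends, h.even, ?_, h.par, h.fr, h.deg⟩
      rintro χ h1 ⟨a, ha, hne⟩
      exact h.cut χ h1 ⟨a, Finset.mem_of_mem_erase ha, hne⟩
    · intro _
      refine h.cut _ (ind_B hyB hz) ⟨y, hy, ?_⟩
      rw [ind_self, ind_ne hyz]; decide

end OddDec

namespace OddDec

variable {V E : Type} [DecidableEq V] [DecidableEq E]

/-- Degree of `v` in the graph with edges `T`. -/
def dg (en : E → Bool → V) (T : Finset E) (v : V) : ℕ :=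
  ∑ e ∈ T, ((if en e false = v then 1 else 0) + (if en e true = v then 1 else 0))

variable {k : ℕ} {z : V} {B A : Finset V} {en : E → Bool → V} {w : E → ZMod 2} {T : Finset E}

theorem deg_sum (hd : Disjoint A B) (hends : ∀ e ∈ T, ∀ i, en e i ∈ A ∪ B)
    (hA : ∀ v ∈ A, dg en T v = 6)
    (hB : ∑ e ∈ T, ((if en e false ∈ B then 1 else 0) + (if en e true ∈ B then 1 else 0)) = 2 * k)
    (φ : V → ℕ) (c : ℕ) (hc : ∀ b ∈ B, φ b = c) :
    ∑ e ∈ T, (φ (en e false) + φ (en e true)) = 6 * ∑ v ∈ A, φ v + c * (2 * k) := by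
  have hv : ∀ v ∈ A ∪ B, φ v = ∑ a ∈ A, φ a * (if v = a then 1 else 0) +
      c * (if v ∈ B then 1 else 0) := by
    intro v hv
    by_cases hvB : v ∈ B
    · have hvA : v ∉ A := Finset.disjoint_right.1 hd hvB
      simp [hvB, hvA, hc v hvB]
    · have hvA : v ∈ A := (Finset.mem_union.1 hv).resolve_right hvB
      simp [hvB, hvA]
  have e1 : ∑ e ∈ T, (φ (en e false) + φ (en e true)) =
      ∑ e ∈ T, (∑ a ∈ A, φ a * ((if en e false = a then 1 else 0) +
        (if en e true = a then 1 else 0)) +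
        c * ((if en e false ∈ B then 1 else 0) + (if en e true ∈ B then 1 else 0))) := by
    refine Finset.sum_congr rfl fun e he => ?_
    rw [hv _ (hends e he false), hv _ (hends e he true)]
    simp only [mul_add, Finset.sum_add_distrib]
    ring
  rw [e1, Finset.sum_add_distrib, ← Finset.mul_sum, hB, Finset.sum_comm, Finset.mul_sum]
  congr 1
  refine Finset.sum_congr rfl fun a ha => ?_
  rw [← Finset.mul_sum]
  have := hA a ha
  rw [dg] at this
  rw [this, mul_comm]

theorem even_gen (hd : Disjoint A B) (hends : ∀ e ∈ T, ∀ i, en e i ∈ A ∪ B)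
    (hA : ∀ v ∈ A, dg en T v = 6)
    (hB : ∑ e ∈ T, ((if en e false ∈ B then 1 else 0) + (if en e true ∈ B then 1 else 0)) = 2 * k)
    (χ : V → ZMod 2) (hχ : ∀ b ∈ B, χ b = χ z) : ∑ e ∈ T, cr en χ e = 0 := by
  have h1 := deg_sum hd hends hA hB (fun v => (χ v).val) (χ z).val
    (fun b hb => by rw [hχ b hb])
  have h2 := congrArg (fun n : ℕ => (n : ZMod 2)) h1
  simp only [Nat.cast_sum, Nat.cast_add, Nat.cast_mul, ZMod.natCast_val, ZMod.cast_id', id] at h2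
  have h6 : ((6 : ℕ) : ZMod 2) = 0 := by decide
  have h22 : ((2 : ℕ) : ZMod 2) = 0 := by decide
  rw [h6, h22] at h2
  simp only [cr]
  rw [h2]; ring

theorem coreApp (hz : z ∈ B) (hd : Disjoint A B) (hends : ∀ e ∈ T, ∀ i, en e i ∈ A ∪ B)
    (hA : ∀ v ∈ A, dg en T v = 6)
    (hB : ∑ e ∈ T, ((if en e false ∈ B then 1 else 0) + (if en e true ∈ B then 1 else 0)) = 2 * k)
    (hAe : Even A.card) (hk : 1 ≤ k) (hk3 : k ≤ 3) (hw : ∀ e ∈ T, w e = 1)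
    (hcut : ∀ χ : V → ZMod 2, (∀ b ∈ B, χ b = χ z) → (∃ a ∈ A, χ a ≠ χ z) →
      2 * k ≤ N T (cr en χ)) : Concl B k en w T := by
  have hcard : T.card = 3 * A.card + k := by
    have := deg_sum hd hends hA hB (fun _ => 1) 1 (fun _ _ => rfl)
    simp at this
    omega
  obtain ⟨m, hm⟩ := hAe
  refine lemA hk hz _ A rfl hd en w T ⟨hends, even_gen hd hends hA hB, hcut, ?_, ?_, hB⟩
  · rw [Finset.sum_congr rfl hw]
    simp only [Finset.sum_const, nsmul_eq_mul, mul_one]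
    rw [hcard, hm]
    have h22 : (2 : ZMod 2) = 0 := by decide
    push_cast
    linear_combination 3 * (m : ZMod 2) * h22
  · intro l hl
    have h1 := deg_sum hd hends hA hB (fun v => (l v).val) (l z).val
      (fun b hb => by rw [hl b hb])
    have hδ := val_le_one (l z)
    have h2 : ∑ e ∈ T, ((l (en e false)).val + (l (en e true)).val) =
        2 * N T (fun e => l (en e false) * l (en e true)) + N T (cr en l) := by
      simp only [N, Finset.mul_sum, ← Finset.sum_add_distrib, cr]
      refine Finset.sum_congr rfl fun e _ => ?_
      generalize l (en e false) = a
      generalize l (en e true) = b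
      revert a b; decide
    have h3 : N T (fun e => w e + cr en l e) + N T (cr en l) = T.card := by
      rw [Finset.card_eq_sum_ones]
      simp only [N, ← Finset.sum_add_distrib]
      refine Finset.sum_congr rfl fun e he => ?_
      rw [hw e he]
      generalize cr en l e = a
      revert a; decide
    have h4 : N T (fun e => l (en e false) * l (en e true)) ≤ N T (fun e => w e + cr en l e) := by
      refine Finset.sum_le_sum fun e he => ?_
      simp only [hw e he, cr]
      generalize l (en e false) = a
      generalize l (en e true) = b
      revert a b; decide
    generalize (l z).val = δ at *
    generalize ∑ v ∈ A, (l v).val = s at *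
    generalize N T (fun e => l (en e false) * l (en e true)) = b at *
    generalize N T (fun e => w e + cr en l e) = f at *
    generalize N T (cr en l) = c at *
    have hδ' : δ = 0 ∨ δ = 1 := by omega
    rcases hδ' with rfl | rfl <;> interval_cases k <;> omega

theorem Dec_base {en : E → Bool → V} {w : E → ZMod 2} {T : Finset E} {z : V}
    (hT : T.card = 3) (h : ∀ e ∈ T, w e = 1 ∧ ∀ i, en e i = z) : Dec en w T z := by
  let f := Finset.equivFinOfCardEq hT
  have hcr : ∀ (χ : V → ZMod 2), ∀ e ∈ T, cr en χ e = 0 := fun χ e he =>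
    cr_loop ((h e he).2 false) ((h e he).2 true) χ
  refine ⟨fun e => if he : e ∈ T then f ⟨e, he⟩ else 0, fun i => ⟨?_, ?_, ?_⟩⟩
  · intro χ
    refine Finset.sum_eq_zero fun e he => ?_
    rw [hcr χ e he, ite_self]
  · rw [Finset.sum_eq_single (f.symm i : E)]
    · simp [(h _ (f.symm i).2).1]
    · intro e he hne
      rw [if_neg]
      intro hc
      simp only [he, dif_pos] at hc
      apply hne
      rw [← hc]; simp
    · intro hn; exact absurd (f.symm i).2 hn
  · intro χ hχ _ e he _ j
    rw [(h e he).2 j, hχ]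

/-- One reduction step along a small edge cut. -/
theorem step {S : Finset E} (ih : ∀ (en : E → Bool → V) (w : E → ZMod 2) (S : Finset E)
      (B : Finset V), B.card < A.card → Odd B.card →
      (∀ e ∈ S, ∀ i, en e i ∈ B) → (∀ v ∈ B, dg en S v = 6) → (∀ e ∈ S, w e = 1) →
      (∀ χ : V → ZMod 2, (∃ a ∈ B, ∃ b ∈ B, χ a ≠ χ b) → 0 < N S (cr en χ)) →
      ∃ z ∈ B, Dec en w S z)
    (hends : ∀ e ∈ S, ∀ i, en e i ∈ A) (hdeg : ∀ v ∈ A, dg en S v = 6)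
    (hw : ∀ e ∈ S, w e = 1) (hodd : Odd A.card) (hk : 1 ≤ k) (hk3 : k ≤ 3)
    (hmin : ∀ χ : V → ZMod 2, (∃ a ∈ A, ∃ b ∈ A, χ a ≠ χ b) → 2 * k ≤ N S (cr en χ))
    {χ₀ : V → ZMod 2} (hnc : ∃ a ∈ A, ∃ b ∈ A, χ₀ a ≠ χ₀ b) (hN : N S (cr en χ₀) = 2 * k)
    (hev : Even (A.filter fun v => χ₀ v = 1).card) : ∃ z ∈ A, Dec en w S z := by
  set U := A.filter fun v => χ₀ v = 1 with hU
  set B := A.filter fun v => χ₀ v = 0 with hB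
  set T := S.filter fun e => ¬ (χ₀ (en e false) = 0 ∧ χ₀ (en e true) = 0) with hT
  set R := S.filter fun e => (χ₀ (en e false) = 0 ∧ χ₀ (en e true) = 0) with hR
  have hB' : B = A.filter fun v => ¬ χ₀ v = 1 := by
    rw [hB]
    refine Finset.filter_congr fun v _ => ?_
    generalize χ₀ v = a; revert a; decide
  have hUB : U ∪ B = A := by rw [hB', hU]; exact Finset.filter_union_filter_not_eq _ _
  have hdUB : Disjoint U B := by rw [hB', hU]; exact Finset.disjoint_filter_filter_not _ _ _
  have hRT : R ∪ T = S := Finset.filter_union_filter_not_eq _ _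
  have hdRT : Disjoint R T := Finset.disjoint_filter_filter_not _ _ _
  have hcardA : U.card + B.card = A.card := by
    rw [← Finset.card_union_of_disjoint hdUB, hUB]
  have hex : (∃ u, u ∈ U) ∧ (∃ b, b ∈ B) := by
    obtain ⟨a, ha, b, hb, hne⟩ := hnc
    rcases z2 (χ₀ a) with h1 | h1 <;> rcases z2 (χ₀ b) with h2 | h2
    · exact absurd (h1.trans h2.symm) hne
    · exact ⟨⟨b, by simp [hU, hb, h2]⟩, ⟨a, by simp [hB, ha, h1]⟩⟩
    · exact ⟨⟨a, by simp [hU, ha, h1]⟩, ⟨b, by simp [hB, hb, h2]⟩⟩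
    · exact absurd (h1.trans h2.symm) hne
  obtain ⟨⟨u, hu⟩, ⟨z, hz⟩⟩ := hex
  have hUpos : 0 < U.card := Finset.card_pos.2 ⟨u, hu⟩
  have hBA : ∀ b ∈ B, b ∈ A := fun b hb => (Finset.mem_filter.1 hb).1
  have hUA : ∀ b ∈ U, b ∈ A := fun b hb => (Finset.mem_filter.1 hb).1
  have hTS : ∀ e ∈ T, e ∈ S := fun b hb => (Finset.mem_filter.1 hb).1
  have hRS : ∀ e ∈ R, e ∈ S := fun b hb => (Finset.mem_filter.1 hb).1
  have hRB : ∀ e ∈ R, ∀ i, en e i ∈ B := by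
    intro e he i
    have h1 := (Finset.mem_filter.1 he).2
    refine Finset.mem_filter.2 ⟨hends e (hRS e he) i, ?_⟩
    cases i
    · exact h1.1
    · exact h1.2
  have hsum : ∀ {M : Type} [AddCommMonoid M] (p : E → M), ∑ e ∈ S, p e =
      ∑ e ∈ R, p e + ∑ e ∈ T, p e := by
    intro M _ p
    rw [← hRT, Finset.sum_union hdRT]
  have hcR : ∀ χ : V → ZMod 2, (∀ b ∈ B, χ b = χ z) → N S (cr en χ) = N T (cr en χ) := by
    intro χ hχ
    rw [N, hsum, Finset.sum_eq_zero, zero_add, N]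
    intro e he
    have : cr en χ e = 0 := by
      rw [cr, hχ _ (hRB e he false), hχ _ (hRB e he true)]
      generalize χ z = a; revert a; decide
    rw [this]; rfl
  have hz0 : χ₀ z = 0 := (Finset.mem_filter.1 hz).2
  have hB0 : ∀ b ∈ B, χ₀ b = χ₀ z := fun b hb => by rw [hz0]; exact (Finset.mem_filter.1 hb).2
  have hdegB : ∑ e ∈ T, ((if en e false ∈ B then 1 else 0) + (if en e true ∈ B then 1 else 0)) =
      2 * k := by
    rw [← hN, hcR χ₀ hB0]
    refine Finset.sum_congr rfl fun e he => ?_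
    have h1 := (Finset.mem_filter.1 he).2
    have hi : ∀ i, (en e i ∈ B ↔ χ₀ (en e i) = 0) := fun i => by
      simp [hB, hends e (hTS e he) i]
    simp only [hi, cr]
    revert h1
    generalize χ₀ (en e false) = a
    generalize χ₀ (en e true) = b
    revert a b; decide
  have hdegU : ∀ v ∈ U, dg en T v = 6 := by
    intro v hv
    rw [← hdeg v (hUA v hv), dg, dg, hsum]
    symm
    rw [Finset.sum_eq_zero, zero_add]
    intro e he
    have : ∀ i, en e i ≠ v := fun i h =>
      Finset.disjoint_left.1 hdUB hv (h ▸ hRB e he i)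
    simp [this]
  obtain ⟨en', w', T', c1, c2, c3, c4, c5, c6⟩ := coreApp (w := w) hz hdUB
    (fun e he i => by rw [hUB]; exact hends e (hTS e he) i) hdegU hdegB hev hk hk3
    (fun e he => hw e (hTS e he)) (by
      rintro χ h1 ⟨a, ha, hne⟩
      rw [← hcR χ h1]
      exact hmin χ ⟨a, hUA a ha, z, hBA z hz, hne⟩)
  have hdRT' : Disjoint R T' := hdRT.mono_right c1
  have hRT4 : ∀ e ∈ R, en' e = en e ∧ w' e = w e := fun e he =>
    c4 e (Finset.disjoint_left.1 hdRT he)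
  obtain ⟨z', hz', hdec⟩ := ih en' w' (R ∪ T') B (by omega) (by
      rw [← hcardA] at hodd
      exact (Nat.odd_add'.1 hodd).2 hev) (by
      intro e he i
      rcases Finset.mem_union.1 he with he | he
      · rw [(hRT4 e he).1]; exact hRB e he i
      · exact (c3 e he).2 i) (by
      intro v hv
      rw [dg, Finset.sum_union hdRT']
      have := c5 (fun x => if x = v then 1 else 0) (by
        intro x hx
        have : x ≠ v := fun h => hx (h ▸ hv)
        simp [this])
      rw [this, ← hdeg v (hBA v hv), dg, hsum]
      congr 1
      exact Finset.sum_congr rfl fun e he => by rw [(hRT4 e he).1]) (by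
      intro e he
      rcases Finset.mem_union.1 he with he | he
      · rw [(hRT4 e he).2]; exact hw e (hRS e he)
      · exact (c3 e he).1) (by
      rintro χ ⟨a, ha, b, hb, hne⟩
      by_contra h0
      have hzero : N (R ∪ T') (cr en' χ) = 0 := by omega
      have hR0 : ∀ e ∈ R, cr en χ e = 0 := by
        intro e he
        by_contra h1
        have h2 : cr en' χ e = 1 := by
          rw [cr, (hRT4 e he).1]; exact z2_one h1
        have := N_pos (Finset.mem_union_left T' he) h2
        omega
      have ha0 : χ₀ a = 0 := (Finset.mem_filter.1 ha).2
      have hb0 : χ₀ b = 0 := (Finset.mem_filter.1 hb).2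
      have m1 := hmin (fun v => (1 + χ₀ v) * χ v) ⟨a, hBA a ha, b, hBA b hb, by
        simpa [ha0, hb0] using hne⟩
      have m2 := hmin (fun v => (1 + χ₀ v) * (1 + χ v)) ⟨a, hBA a ha, b, hBA b hb, by
        simpa [ha0, hb0] using hne⟩
      have m3 : N S (cr en (fun v => (1 + χ₀ v) * χ v)) +
          N S (cr en (fun v => (1 + χ₀ v) * (1 + χ v))) ≤ N S (cr en χ₀) := by
        simp only [N, ← Finset.sum_add_distrib]
        refine Finset.sum_le_sum fun e he => ?_
        have h1 : (χ₀ (en e false) = 0 ∧ χ₀ (en e true) = 0) → cr en χ e = 0 := fun h =>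
          hR0 e (Finset.mem_filter.2 ⟨he, h⟩)
        revert h1
        simp only [cr]
        generalize χ₀ (en e false) = a
        generalize χ₀ (en e true) = b
        generalize χ (en e false) = c
        generalize χ (en e true) = d
        revert a b c d; decide
      omega)
  refine ⟨z', hBA z' hz', ?_⟩
  rw [← hRT]
  exact c6 R hdRT z' hz' hdec

theorem outer : ∀ (n : ℕ) (en : E → Bool → V) (w : E → ZMod 2) (S : Finset E)
      (A : Finset V), A.card < n → Odd A.card →
      (∀ e ∈ S, ∀ i, en e i ∈ A) → (∀ v ∈ A, dg en S v = 6) → (∀ e ∈ S, w e = 1) →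
      (∀ χ : V → ZMod 2, (∃ a ∈ A, ∃ b ∈ A, χ a ≠ χ b) → 0 < N S (cr en χ)) →
      ∃ z ∈ A, Dec en w S z := by
  intro n
  induction n with
  | zero => intro en w S A h; omega
  | succ n ih =>
    intro en w S A hcard hodd hends hdeg hw hconn
    by_cases hex : ∃ χ : V → ZMod 2, (∃ a ∈ A, ∃ b ∈ A, χ a ≠ χ b) ∧ N S (cr en χ) < 6
    · obtain ⟨χ₁, hχ₁, hlt⟩ := hex
      obtain ⟨χ₀, hχ₀, hmin⟩ := WellFounded.has_min
        (measure (fun χ : V → ZMod 2 => N S (cr en χ))).wf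
        {χ | ∃ a ∈ A, ∃ b ∈ A, χ a ≠ χ b} ⟨χ₁, hχ₁⟩
      have hmin' : ∀ χ : V → ZMod 2, (∃ a ∈ A, ∃ b ∈ A, χ a ≠ χ b) →
          N S (cr en χ₀) ≤ N S (cr en χ) := fun χ hχ => not_lt.1 (hmin χ hχ)
      have hχ₀' : ∃ a ∈ A, ∃ b ∈ A, χ₀ a ≠ χ₀ b := hχ₀
      have heven : Even (N S (cr en χ₀)) := by
        obtain ⟨a, -⟩ := hχ₀'
        refine N_even (even_gen (A := A) (B := ∅) (k := 0) (z := a) (by simp) (by simpa using hends)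
          hdeg (by simp) χ₀ (by simp))
      obtain ⟨k, hk⟩ := heven
      have hpos := hconn χ₀ hχ₀'
      have hlt' := hmin' χ₁ hχ₁
      have hk1 : 1 ≤ k := by omega
      have hk3 : k ≤ 3 := by omega
      have hk2 : N S (cr en χ₀) = 2 * k := by omega
      rw [hk2] at hmin'
      have ih' : ∀ (en : E → Bool → V) (w : E → ZMod 2) (S : Finset E)
        (B : Finset V), B.card < A.card → Odd B.card →
        (∀ e ∈ S, ∀ i, en e i ∈ B) → (∀ v ∈ B, dg en S v = 6) → (∀ e ∈ S, w e = 1) →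
        (∀ χ : V → ZMod 2, (∃ a ∈ B, ∃ b ∈ B, χ a ≠ χ b) → 0 < N S (cr en χ)) →
        ∃ z ∈ B, Dec en w S z := fun en w S B hB => ih en w S B (by omega)
      by_cases hev : Even (A.filter fun v => χ₀ v = 1).card
      · exact step ih' hends hdeg hw hodd hk1 hk3 hmin' hχ₀' hk2 hev
      · refine step (χ₀ := fun v => 1 + χ₀ v) ih' hends hdeg hw hodd hk1 hk3 hmin' ?_ ?_ ?_
        · obtain ⟨a, ha, b, hb, hne⟩ := hχ₀'
          exact ⟨a, ha, b, hb, fun h => hne (add_left_cancel h)⟩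
        · rw [← hk2]
          refine N_congr fun e _ => ?_
          simp only [cr]
          generalize χ₀ (en e false) = a
          generalize χ₀ (en e true) = b
          revert a b; decide
        · have h1 : (A.filter fun v => 1 + χ₀ v = 1) = A.filter fun v => ¬ χ₀ v = 1 := by
            refine Finset.filter_congr fun v _ => ?_
            generalize χ₀ v = a
            revert a; decide
          rw [h1]
          have h2 := Finset.card_filter_add_card_filter_not (s := A) (fun v => χ₀ v = 1)
          rw [← h2] at hodd
          exact (Nat.odd_add.1 hodd).1 (Nat.not_even_iff_odd.1 hev)
    · push Not at hex
      obtain ⟨z, hz⟩ : A.Nonempty := by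
        rw [← Finset.card_pos]; exact hodd.pos
      refine ⟨z, hz, ?_⟩
      have hU : A.erase z ∪ {z} = A := by
        rw [Finset.union_comm, ← Finset.insert_eq, Finset.insert_erase hz]
      obtain ⟨en', w', T', c1, c2, c3, c4, c5, c6⟩ := coreApp (A := A.erase z) (B := {z}) (z := z)
        (k := 3) (en := en) (w := w) (T := S) (by simp) (by simp) (by rw [hU]; exact hends)
        (fun v hv => hdeg v (Finset.mem_of_mem_erase hv))
        (by have := hdeg z hz; rw [dg] at this; simpa using this)
        (by
          rw [Finset.card_erase_of_mem hz]
          exact Nat.Odd.sub_odd hodd odd_one)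
        (by norm_num) (by norm_num) hw (by
          rintro χ - ⟨a, ha, hne⟩
          exact hex χ ⟨a, Finset.mem_of_mem_erase ha, z, hz, hne⟩)
      have := c6 ∅ (by simp) z (by simp) (by
        rw [Finset.empty_union]
        refine Dec_base c2 fun e he => ⟨(c3 e he).1, fun i => ?_⟩
        simpa using (c3 e he).2 i)
      rwa [Finset.empty_union] at this

end OddDec

namespace OddDec

open Multigraph

variable {V E : Type} [Fintype V] [Fintype E] [DecidableEq V] [DecidableEq E]

theorem valencyOn_eq (G : Multigraph V E) (S : Finset E) (v : V) :
    G.valencyOn S v = dg G.ends S v := by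
  rw [valencyOn, dg, Finset.card_filter, Fintype.sum_prod_type]
  simp only [Fintype.sum_bool]
  rw [← Finset.sum_subset (Finset.subset_univ S)]
  · refine Finset.sum_congr rfl fun e he => ?_
    simp [he, add_comm]
  · intro e _ he
    simp [he]

theorem adj_symm (G : Multigraph V E) (S : Finset E) {u v : V} (h : G.AdjOn S u v) :
    G.AdjOn S v u := by
  obtain ⟨e, he, i, h1, h2⟩ := h
  exact ⟨e, he, !i, h2, by simpa using h1⟩

theorem cr_adj (G : Multigraph V E) (S : Finset E) {χ : V → ZMod 2}
    (h : ∀ e ∈ S, cr G.ends χ e = 0) {u v : V} (ha : G.AdjOn S u v) : χ u = χ v := by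
  obtain ⟨e, he, i, rfl, rfl⟩ := ha
  have := h e he
  have t : ∀ a b : ZMod 2, a + b = 0 → a = b := by decide
  cases i
  · exact t _ _ this
  · exact (t _ _ this).symm

theorem piece (G : Multigraph V E) (S : Finset E) (z : V)
    (h1 : ∀ χ : V → ZMod 2, ∑ e ∈ S, cr G.ends χ e = 0)
    (h2 : ∑ _e ∈ S, (1 : ZMod 2) = 1)
    (h3 : ∀ χ : V → ZMod 2, χ z = 0 → (∀ e ∈ S, cr G.ends χ e = 0) →
      ∀ e ∈ S, ∀ j, χ (G.ends e j) = 0) :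
    G.EulerianOn S ∧ Odd S.card ∧ z ∈ G.suppV S := by
  classical
  have hodd : Odd S.card := by
    rw [← ZMod.natCast_eq_one_iff_odd]
    simpa using h2
  have hne : S.Nonempty := Finset.card_pos.1 hodd.pos
  have hreach : ∀ v ∈ G.suppV S, Relation.ReflTransGen (G.AdjOn S) z v := by
    intro v hv
    obtain ⟨e, he, i, rfl⟩ := (Finset.mem_filter.1 hv).2
    have := h3 (fun v => if Relation.ReflTransGen (G.AdjOn S) z v then 0 else 1)
      (by simp [Relation.ReflTransGen.refl]) (by
        intro x hx
        have a1 : G.AdjOn S (G.ends x false) (G.ends x true) := ⟨x, hx, false, rfl, rfl⟩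
        have iff : Relation.ReflTransGen (G.AdjOn S) z (G.ends x false) ↔
            Relation.ReflTransGen (G.AdjOn S) z (G.ends x true) :=
          ⟨fun h => h.tail a1, fun h => h.tail (adj_symm G S a1)⟩
        simp only [cr, iff]
        split_ifs <;> decide) e he i
    by_contra hc
    simp [hc] at this
  refine ⟨⟨hne, ?_, ?_⟩, hodd, ?_⟩
  · intro u hu v hv
    refine Relation.ReflTransGen.trans ?_ (hreach v hv)
    have key : ∀ u, Relation.ReflTransGen (G.AdjOn S) z u →
        Relation.ReflTransGen (G.AdjOn S) u z := by
      intro u hu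
      induction hu with
      | refl => exact Relation.ReflTransGen.refl
      | tail _ h ih => exact Relation.ReflTransGen.head (adj_symm G S h) ih
    exact key u (hreach u hu)
  · intro v
    rw [valencyOn_eq, ← ZMod.natCast_eq_zero_iff_even, dg]
    have := h1 (ind v)
    simpa [cr, ind] using this
  · by_contra hz
    obtain ⟨e, he⟩ := hne
    have hno : ∀ x ∈ S, ∀ i, G.ends x i ≠ z := by
      intro x hx i h
      exact hz (Finset.mem_filter.2 ⟨Finset.mem_univ _, x, hx, i, h⟩)
    have := h3 (fun v => if v = z then 0 else 1) (by simp) (by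
      intro x hx
      simp only [cr, hno x hx, if_false]
      decide) e he false
    simp [hno e he] at this

theorem final (G : Multigraph V E) (hconn : G.Connected)
    (hreg : ∀ v : V, G.valency v = 6) (hodd : Odd (Fintype.card V)) :
    ∃ z, Dec G.ends (fun _ => 1) univ z := by
  obtain ⟨z, -, h⟩ := outer (V := V) (E := E) _ G.ends (fun _ => 1) univ univ (Nat.lt_succ_self _)
    (by simpa using hodd) (by simp) (fun v _ => by rw [← valencyOn_eq]; exact hreg v) (by simp) (by
    rintro χ ⟨a, -, b, -, hne⟩
    by_contra h0
    apply hne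
    have hz : ∀ e ∈ (univ : Finset E), cr G.ends χ e = 0 := by
      intro e he
      by_contra h1
      have := N_pos he (z2_one h1)
      omega
    have key : ∀ b, Relation.ReflTransGen (G.AdjOn univ) a b → χ a = χ b := by
      intro b hb
      induction hb with
      | refl => rfl
      | tail _ h ih => exact ih.trans (cr_adj G univ hz h)
    exact key b (hconn.2 a b))
  exact ⟨z, h⟩

end OddDec

open Multigraph in
/-- Every connected `6`-regular graph of odd order can be
decomposed into three edge-disjoint eulerian subgraphs sharing a common vertex
such that each of them has an odd number of edges. -/
theorem stmt17 {V E : Type} [Fintype V] [Fintype E] [DecidableEq V]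
    [DecidableEq E] (G : Multigraph V E) (hconn : G.Connected)
    (hreg : ∀ v : V, G.valency v = 6) (hodd : Odd (Fintype.card V)) :
    ∃ S₁ S₂ S₃ : Finset E,
      Disjoint S₁ S₂ ∧ Disjoint S₁ S₃ ∧ Disjoint S₂ S₃ ∧
      S₁ ∪ S₂ ∪ S₃ = univ ∧
      G.EulerianOn S₁ ∧ G.EulerianOn S₂ ∧ G.EulerianOn S₃ ∧
      Odd S₁.card ∧ Odd S₂.card ∧ Odd S₃.card ∧
      ∃ v : V, v ∈ G.suppV S₁ ∧ v ∈ G.suppV S₂ ∧ v ∈ G.suppV S₃ := by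
  obtain ⟨z, c, hc⟩ := OddDec.final G hconn hreg hodd
  have hp : ∀ i : Fin 3, G.EulerianOn (univ.filter fun e => c e = i) ∧
      Odd (univ.filter fun e => c e = i).card ∧ z ∈ G.suppV (univ.filter fun e => c e = i) := by
    intro i
    obtain ⟨h1, h2, h3⟩ := hc i
    refine OddDec.piece G _ z (fun χ => ?_) ?_ (fun χ hz h e he j => ?_)
    · rw [Finset.sum_filter]; exact h1 χ
    · rw [Finset.sum_filter]; exact h2
    · refine h3 χ hz (fun e _ hce => h e ?_) e (Finset.mem_univ _) (Finset.mem_filter.1 he).2 j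
      exact Finset.mem_filter.2 ⟨Finset.mem_univ _, hce⟩
  have hdj : ∀ i j : Fin 3, i ≠ j → Disjoint (univ.filter fun e => c e = i)
      (univ.filter fun e => c e = j) := by
    intro i j hij
    rw [Finset.disjoint_left]
    intro e h1 h2
    exact hij ((Finset.mem_filter.1 h1).2.symm.trans (Finset.mem_filter.1 h2).2)
  refine ⟨univ.filter fun e => c e = 0, univ.filter fun e => c e = 1, univ.filter fun e => c e = 2,
    hdj _ _ (by decide), hdj _ _ (by decide), hdj _ _ (by decide), ?_, (hp 0).1, (hp 1).1,
    (hp 2).1, (hp 0).2.1, (hp 1).2.1, (hp 2).2.1, z, (hp 0).2.2, (hp 1).2.2, (hp 2).2.2⟩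
  ext e
  simp only [Finset.mem_union, Finset.mem_filter, Finset.mem_univ, true_and, iff_true]
  have : ∀ i : Fin 3, (i = 0 ∨ i = 1) ∨ i = 2 := by decide
  exact this (c e)
end
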